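/- arXiv:1606.01749 — 5 statements merged into one kernel-verified Lean document; each statement's English description precedes it below -/
import Mathlib

section
/- For all real numbers λ₁ > 0 and λ₂ with 0 ≤ λ₂ < 1, the Generalized Poisson probability mass function sums to one: ∑_{x=0}^∞ λ₁(λ₁ + xλ₂)^{x-1} e^{-(λ₁ + xλ₂)} / x! = 1. -/
/-!
Let `X` have the distribution GP(a, b), let `S N a` be the sum of its first `N` probabilities, and
let `D N a = 1 - S N a`, which is to become `P(X ≥ N)`. The Abel polynomials `a (a + n b)ⁿ⁻¹` have
derivative `n (a + b) (a + n b)ⁿ⁻²` in `a`, so that `D (N + 1)' a = D N (a + b) - D (N + 1) a`.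
By induction on `N`, comparing solutions of `y' + y = f` on `[0, ∞)`, this equation gives first
`0 ≤ D N a` and then `∑ 1 ≤ k ≤ N, D k a ≤ a / (1 - b)`. Here the left-hand side is the mean of
`min X N`, and the right-hand side, the mean of `X`, solves `y'(a) = 1 + y(a + b) - y(a)`, the limit
of the equation for the left-hand side. As `D` decreases in `N`, Markov's inequality
`N * D N a ≤ a / (1 - b)` follows, and `D N a` tends to `0`.
-/

open Finset Filter Topology

theorem nonneg_of_hasDerivAt_add_mul_nonneg {f f' : ℝ → ℝ} {c x₀ : ℝ}
    (hderiv : ∀ x, x₀ ≤ x → HasDerivAt f (f' x) x)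
    (hineq : ∀ x, x₀ ≤ x → 0 ≤ f' x + c * f x) (hinit : 0 ≤ f x₀) {x : ℝ} (hx : x₀ ≤ x) :
    0 ≤ f x := by
  have hexp (t : ℝ) (ht : x₀ ≤ t) :
      HasDerivAt (fun s ↦ Real.exp (c * s) * f s) (Real.exp (c * t) * (f' t + c * f t)) t := by
    refine ((hasDerivAt_const_mul c).exp.mul (hderiv t ht)).congr_deriv ?_
    ring
  have hmono : MonotoneOn (fun s ↦ Real.exp (c * s) * f s) (Set.Ici x₀) :=
    monotoneOn_of_hasDerivWithinAt_nonneg (convex_Ici x₀)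
      (fun t ht ↦ (hexp t ht).continuousAt.continuousWithinAt)
      (fun t ht ↦ (hexp t (interior_subset ht)).hasDerivWithinAt)
      fun t ht ↦ mul_nonneg (Real.exp_pos _).le (hineq t (interior_subset ht))
  have hle : Real.exp (c * x₀) * f x₀ ≤ Real.exp (c * x) * f x :=
    hmono Set.self_mem_Ici hx hx
  exact nonneg_of_mul_nonneg_right ((mul_nonneg (Real.exp_pos _).le hinit).trans hle)
    (Real.exp_pos _)

/-- The mass at `n` of the Generalized Poisson distribution with parameters `a` and `b`. The case
`n = 0` is separate so that the formula is also right, and differentiable in `a`, at `a = 0`. The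
parameter `a` comes last because the mass is studied as a function of it. -/
noncomputable def genPoissonMass (b : ℝ) : ℕ → ℝ → ℝ
  | 0, a => Real.exp (-a)
  | n + 1, a =>
    a * (a + (n + 1) * b) ^ n * Real.exp (-(a + (n + 1) * b)) / (n + 1).factorial

/-- The probability of `{N, N + 1, …} ∪ {∞}` under the Generalized Poisson distribution with
parameters `a` and `b`, where `∞` carries whatever mass the natural numbers may lack. -/
noncomputable def genPoissonTail (b : ℝ) (N : ℕ) (a : ℝ) : ℝ :=
  1 - ∑ n ∈ range N, genPoissonMass b n a

section

variable (a b : ℝ)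

theorem hasDerivAt_genPoissonMass_zero :
    HasDerivAt (genPoissonMass b 0) (-genPoissonMass b 0 a) a :=
  (hasDerivAt_neg a).exp.congr_deriv (mul_neg_one _)

theorem hasDerivAt_genPoissonMass_succ (n : ℕ) :
    HasDerivAt (genPoissonMass b (n + 1))
      (genPoissonMass b n (a + b) - genPoissonMass b (n + 1) a) a := by
  have hshift : HasDerivAt (fun x ↦ x + (n + 1) * b) 1 a := (hasDerivAt_id a).add_const _
  refine ((((hasDerivAt_id a).mul (hshift.pow n)).mul hshift.neg.exp).div_const
    ((n + 1).factorial : ℝ)).congr_deriv ?_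
  cases n with
  | zero =>
    simp only [genPoissonMass, Nat.cast_zero, zero_add, one_mul, pow_zero, Pi.one_apply, mul_one,
      id_eq, zero_mul, mul_zero, add_zero, Pi.neg_apply, neg_add_rev, Pi.mul_apply, mul_neg,
      Nat.factorial_one, Nat.cast_one, div_one]
    ring
  | succ m =>
    have harg : a + b + (m + 1) * b = a + (m + 1 + 1) * b := by ring
    simp only [genPoissonMass, harg, Nat.factorial_succ (m + 1), Nat.cast_mul, Nat.cast_succ,
      add_tsub_cancel_right, id_eq, Pi.mul_apply, Pi.pow_apply, Pi.neg_apply]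
    field_simp
    ring

@[simp]
theorem genPoissonTail_zero : genPoissonTail b 0 a = 1 := by
  simp [genPoissonTail]

theorem genPoissonTail_succ_at_zero (N : ℕ) : genPoissonTail b (N + 1) 0 = 0 := by
  simp [genPoissonTail, sum_range_succ', genPoissonMass]

theorem hasDerivAt_genPoissonTail_succ (N : ℕ) :
    HasDerivAt (genPoissonTail b (N + 1))
      (genPoissonTail b N (a + b) - genPoissonTail b (N + 1) a) a := by
  have hsum : HasDerivAt (fun x ↦ ∑ n ∈ range (N + 1), genPoissonMass b n x)
      (∑ n ∈ range N, (genPoissonMass b n (a + b) - genPoissonMass b (n + 1) a)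
        + -genPoissonMass b 0 a) a := by
    simp only [sum_range_succ']
    exact (HasDerivAt.fun_sum fun n _ ↦ hasDerivAt_genPoissonMass_succ a b n).add
      (hasDerivAt_genPoissonMass_zero a b)
  refine (hsum.const_sub 1).congr_deriv ?_
  simp only [genPoissonTail, sum_range_succ', sum_sub_distrib]
  ring

theorem hasDerivAt_sum_genPoissonTail_succ (N : ℕ) :
    HasDerivAt (fun x ↦ ∑ k ∈ range (N + 1), genPoissonTail b (k + 1) x)
      (1 + ∑ k ∈ range N, genPoissonTail b (k + 1) (a + b)
        - ∑ k ∈ range (N + 1), genPoissonTail b (k + 1) a) a := by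
  refine (HasDerivAt.fun_sum fun k _ ↦ hasDerivAt_genPoissonTail_succ a b k).congr_deriv ?_
  rw [sum_sub_distrib, sum_range_succ' (fun k ↦ genPoissonTail b k (a + b)),
    genPoissonTail_zero, add_comm 1]

variable {a b}

theorem genPoissonMass_eq_rpow (ha : a ≠ 0) (n : ℕ) :
    genPoissonMass b n a =
      a * (a + n * b) ^ ((n : ℝ) - 1) * Real.exp (-(a + n * b)) / n.factorial := by
  cases n with
  | zero => simp [genPoissonMass, Real.rpow_neg_one, ha]
  | succ n =>
    simp only [genPoissonMass, Nat.cast_succ, add_sub_cancel_right, Real.rpow_natCast]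

theorem genPoissonMass_nonneg (ha : 0 ≤ a) (hb : 0 ≤ b) (n : ℕ) : 0 ≤ genPoissonMass b n a := by
  cases n <;> simp only [genPoissonMass] <;> positivity

theorem antitone_genPoissonTail (ha : 0 ≤ a) (hb : 0 ≤ b) :
    Antitone fun N ↦ genPoissonTail b N a :=
  antitone_nat_of_succ_le fun N ↦ by
    simpa only [genPoissonTail, sum_range_succ, ← sub_sub] using
      sub_le_self _ (genPoissonMass_nonneg ha hb N)

theorem genPoissonTail_nonneg (ha : 0 ≤ a) (hb : 0 ≤ b) (N : ℕ) : 0 ≤ genPoissonTail b N a := by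
  induction N generalizing a with
  | zero => simp
  | succ N ih =>
    refine nonneg_of_hasDerivAt_add_mul_nonneg (c := 1)
      (fun x _ ↦ hasDerivAt_genPoissonTail_succ x b N) (fun x hx ↦ ?_)
      (genPoissonTail_succ_at_zero b N).ge ha
    simpa using ih (add_nonneg hx hb)

theorem sum_genPoissonTail_succ_le (ha : 0 ≤ a) (hb : 0 ≤ b) (hb1 : b < 1) (N : ℕ) :
    ∑ k ∈ range N, genPoissonTail b (k + 1) a ≤ a / (1 - b) := by
  have hb1' : 0 < 1 - b := sub_pos.2 hb1
  induction N generalizing a with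
  | zero => simpa using div_nonneg ha hb1'.le
  | succ N ih =>
    have hderiv (x : ℝ) :
        HasDerivAt (fun y ↦ y / (1 - b) - ∑ k ∈ range (N + 1), genPoissonTail b (k + 1) y)
          (1 / (1 - b) - (1 + ∑ k ∈ range N, genPoissonTail b (k + 1) (x + b)
            - ∑ k ∈ range (N + 1), genPoissonTail b (k + 1) x)) x :=
      ((hasDerivAt_id' x).div_const _).sub (hasDerivAt_sum_genPoissonTail_succ x b N)
    refine sub_nonneg.1 <| nonneg_of_hasDerivAt_add_mul_nonneg (c := 1)
      (fun x _ ↦ hderiv x) (fun x hx ↦ ?_) ?_ ha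
    · have hmean : 1 / (1 - b) + x / (1 - b) = 1 + (x + b) / (1 - b) := by
        field_simp
        ring
      have hshift := ih (add_nonneg hx hb)
      linarith
    · simp [genPoissonTail_succ_at_zero]

theorem mul_genPoissonTail_le (ha : 0 ≤ a) (hb : 0 ≤ b) (hb1 : b < 1) (N : ℕ) :
    N * genPoissonTail b N a ≤ a / (1 - b) := by
  calc N * genPoissonTail b N a = ∑ _k ∈ range N, genPoissonTail b N a := by simp
    _ ≤ ∑ k ∈ range N, genPoissonTail b (k + 1) a :=
      sum_le_sum fun _ hk ↦ antitone_genPoissonTail ha hb (Nat.succ_le_of_lt (mem_range.1 hk))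
    _ ≤ a / (1 - b) := sum_genPoissonTail_succ_le ha hb hb1 N

theorem tendsto_genPoissonTail (ha : 0 ≤ a) (hb : 0 ≤ b) (hb1 : b < 1) :
    Tendsto (fun N ↦ genPoissonTail b N a) atTop (𝓝 0) := by
  refine squeeze_zero' (.of_forall (genPoissonTail_nonneg ha hb)) ?_
    (tendsto_const_div_atTop_nhds_zero_nat (a / (1 - b)))
  filter_upwards [eventually_gt_atTop 0] with N hN
  rw [le_div_iff₀' (Nat.cast_pos.2 hN)]
  exact mul_genPoissonTail_le ha hb hb1 N

theorem hasSum_genPoissonMass (ha : 0 ≤ a) (hb : 0 ≤ b) (hb1 : b < 1) :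
    HasSum (fun n ↦ genPoissonMass b n a) 1 := by
  rw [hasSum_iff_tendsto_nat_of_nonneg (genPoissonMass_nonneg ha hb)]
  simpa [genPoissonTail] using (tendsto_genPoissonTail ha hb hb1).const_sub 1

end

/-- The Generalized Poisson probability mass function sums to one:
for `λ₁ > 0` and `0 ≤ λ₂ < 1`,
`∑_{x=0}^∞ λ₁ (λ₁ + x λ₂)^(x-1) e^{-(λ₁ + x λ₂)} / x! = 1`
(with the exponent `x - 1` taken as a real power, so that the `x = 0`
term is `λ₁ · λ₁⁻¹ · e^{-λ₁} = e^{-λ₁}`). -/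
theorem genPoisson_sums_to_one (lam1 lam2 : ℝ) (h1 : 0 < lam1)
    (h2 : 0 ≤ lam2) (h2' : lam2 < 1) :
    ∑' x : ℕ, lam1 * (lam1 + x * lam2) ^ ((x : ℝ) - 1) *
      Real.exp (-(lam1 + x * lam2)) / (Nat.factorial x) = 1 := by
  simp only [← genPoissonMass_eq_rpow h1.ne']
  exact (hasSum_genPoissonMass h1.le h2 h2').tsum_eq
end

section
/- For all real numbers λ₁ > 0 and λ₂ with 0 ≤ λ₂ < 1, the mean of the Generalized Poisson distribution satisfies ∑_{x=0}^∞ x · λ₁(λ₁ + xλ₂)^{x-1} e^{-(λ₁ + xλ₂)} / x! = λ₁ / (1 − λ₂). -/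
/-!
Cancelling `x` against `x!` and shifting the index turns the mean into `λ₁ S(λ₁ + λ₂, λ₂)`, where
`S(a, b) = ∑ (a + n b)ⁿ e^{-(a + n b)} / n!`, and the point is that `S(a, b) = 1 / (1 - b)`.

For `a = c z` and `b = z` small, expand the exponential: the double series converges absolutely,
and its terms of total degree `m` add up to `zᵐ`, because the `m`-th finite difference of `xᵐ` is
`m!`. So `S(c z, z)` is the geometric series. On the other hand `e^{c z} S(c z, z)` is a power
series in `w = z e^{-z}` converging for `‖w‖ < e⁻¹`, so the identity continues analytically to the
whole region `‖z e^{1 - z}‖ < 1`, `‖z‖ < 1` inside the Szegő curve, which contains `[0, 1)`.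
-/

namespace GenPoisson

open Finset

lemma sum_range_neg_one_pow_mul_choose_mul_add_pow {R : Type*} [CommRing R] (c : R) (m : ℕ) :
    ∑ k ∈ range (m + 1), (-1) ^ (m - k) * (m.choose k : R) * (c + k) ^ m = m.factorial := by
  have h := congrFun (fwdDiff_iter_eq_factorial (R := R) (n := m)) c
  rw [fwdDiff_iter_eq_sum_shift] at h
  simpa using h

lemma sum_antidiagonal_pow_div_factorial_mul_neg_pow_div_factorial
    {K : Type*} [Field K] [CharZero K] (c z : K) (m : ℕ) :
    ∑ p ∈ antidiagonal m, ((c + p.1) * z) ^ p.1 / p.1.factorial *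
      ((-((c + p.1) * z)) ^ p.2 / p.2.factorial) = z ^ m := by
  have hm : (m.factorial : K) ≠ 0 := mod_cast m.factorial_ne_zero
  have term_eq (p : ℕ × ℕ) (hp : p ∈ antidiagonal m) :
      ((c + p.1) * z) ^ p.1 / p.1.factorial * ((-((c + p.1) * z)) ^ p.2 / p.2.factorial) =
        z ^ m / m.factorial * ((-1) ^ p.2 * (m.choose p.1 : K) * (c + p.1) ^ m) := by
    obtain rfl := mem_antidiagonal.mp hp
    rw [Nat.cast_add_choose, neg_pow (_ * z), pow_add z, pow_add (c + _), mul_pow, mul_pow]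
    field_simp
  rw [sum_congr rfl term_eq, ← mul_sum, Nat.sum_antidiagonal_eq_sum_range_succ
    (fun i j : ℕ ↦ (-1) ^ j * (m.choose i : K) * (c + i) ^ m),
    sum_range_neg_one_pow_mul_choose_mul_add_pow, div_mul_cancel₀ _ hm]

lemma norm_add_natCast_le (c : ℂ) (n : ℕ) : ‖c + n‖ ≤ ‖c‖ + n := by
  simpa using norm_add_le c n

lemma norm_add_natCast_pow_div_factorial_le (c : ℂ) (n : ℕ) :
    ‖(c + n) ^ n / n.factorial‖ ≤ Real.exp (‖c‖ + n) := by
  calc ‖(c + n) ^ n / n.factorial‖ = ‖c + n‖ ^ n / n.factorial := by simp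
    _ ≤ (‖c‖ + n) ^ n / n.factorial := by
        gcongr
        exact norm_add_natCast_le c n
    _ ≤ Real.exp (‖c‖ + n) := Real.pow_div_factorial_le_exp _ (by positivity) n

/-- The term `((c + n) z)ⁿ e^{-(c + n) z} / n!` of the series `S(c z, z)`. -/
noncomputable def abelTerm (c z : ℂ) (n : ℕ) : ℂ :=
  ((c + n) * z) ^ n / n.factorial * Complex.exp (-((c + n) * z))

/-- The term of index `(n, k)` of the double series obtained by expanding the exponential factor of
`abelTerm c z n` as a power series. -/
noncomputable def abelDoubleTerm (c z : ℂ) (p : ℕ × ℕ) : ℂ :=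
  ((c + p.1) * z) ^ p.1 / p.1.factorial * ((-((c + p.1) * z)) ^ p.2 / p.2.factorial)

lemma hasSum_abelDoubleTerm_right (c z : ℂ) (n : ℕ) :
    HasSum (fun k ↦ abelDoubleTerm c z (n, k)) (abelTerm c z n) := by
  simp only [abelDoubleTerm, abelTerm, Complex.exp_eq_exp_ℂ]
  exact (NormedSpace.expSeries_div_hasSum_exp (-((c + n) * z))).mul_left _

lemma hasSum_norm_abelDoubleTerm_right (c z : ℂ) (n : ℕ) :
    HasSum (fun k ↦ ‖abelDoubleTerm c z (n, k)‖)
      (‖((c + n) * z) ^ n / n.factorial‖ * Real.exp ‖(c + n) * z‖) := by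
  rw [Real.exp_eq_exp_ℝ]
  refine ((NormedSpace.expSeries_div_hasSum_exp ‖(c + n) * z‖).mul_left _).congr_fun fun k ↦ ?_
  simp [abelDoubleTerm]

lemma norm_pow_div_factorial_mul_exp_norm_le (c : ℂ) {z : ℂ} (hz : ‖z‖ ≤ 1) (n : ℕ) :
    ‖((c + n) * z) ^ n / n.factorial‖ * Real.exp ‖(c + n) * z‖ ≤
      Real.exp (2 * ‖c‖) * (Real.exp 2 * ‖z‖) ^ n := by
  have norm_mul_le_add : ‖(c + n) * z‖ ≤ ‖c‖ + n := calc
    ‖(c + n) * z‖ = ‖c + n‖ * ‖z‖ := norm_mul _ _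
    _ ≤ ‖c + n‖ := mul_le_of_le_one_right (norm_nonneg _) hz
    _ ≤ ‖c‖ + n := norm_add_natCast_le c n
  calc ‖((c + n) * z) ^ n / n.factorial‖ * Real.exp ‖(c + n) * z‖
      = ‖(c + n) ^ n / n.factorial‖ * ‖z‖ ^ n * Real.exp ‖(c + n) * z‖ := by
        rw [mul_pow, mul_div_right_comm, norm_mul, norm_pow z]
    _ ≤ Real.exp (‖c‖ + n) * ‖z‖ ^ n * Real.exp (‖c‖ + n) := by
        gcongr
        exact norm_add_natCast_pow_div_factorial_le c n
    _ = Real.exp (2 * ‖c‖) * (Real.exp 2 * ‖z‖) ^ n := by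
        rw [mul_pow, ← Real.exp_nat_mul, mul_right_comm, ← Real.exp_add, ← mul_assoc,
          ← Real.exp_add]
        ring_nf

lemma summable_abelDoubleTerm (c : ℂ) {z : ℂ} (hz : ‖z‖ < Real.exp (-2)) :
    Summable (abelDoubleTerm c z) := by
  have hz1 : ‖z‖ ≤ 1 := hz.le.trans (Real.exp_le_one_iff.mpr (by norm_num))
  have ratio_lt_one : Real.exp 2 * ‖z‖ < 1 := calc
    Real.exp 2 * ‖z‖ < Real.exp 2 * Real.exp (-2) := by gcongr
    _ = 1 := by rw [← Real.exp_add, add_neg_cancel, Real.exp_zero]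
  have summable_geometric : Summable fun n ↦ Real.exp (2 * ‖c‖) * (Real.exp 2 * ‖z‖) ^ n :=
    (summable_geometric_of_lt_one (by positivity) ratio_lt_one).mul_left _
  refine .of_norm ((summable_prod_of_nonneg fun _ ↦ norm_nonneg _).mpr
    ⟨fun n ↦ (hasSum_norm_abelDoubleTerm_right c z n).summable, ?_⟩)
  simp only [fun n ↦ (hasSum_norm_abelDoubleTerm_right c z n).tsum_eq]
  exact summable_geometric.of_nonneg_of_le (fun n ↦ by positivity)
    (norm_pow_div_factorial_mul_exp_norm_le c hz1)

lemma hasSum_abelTerm_of_norm_lt (c : ℂ) {z : ℂ} (hz : ‖z‖ < Real.exp (-2)) :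
    HasSum (abelTerm c z) (1 - z)⁻¹ := by
  have hz1 : ‖z‖ < 1 := hz.trans (Real.exp_lt_one_iff.mpr (by norm_num))
  have hsum := (summable_abelDoubleTerm c hz).hasSum
  have by_rows : HasSum (abelTerm c z) (∑' p, abelDoubleTerm c z p) :=
    hsum.prod_fiberwise (hasSum_abelDoubleTerm_right c z)
  have by_antidiagonals : HasSum (fun m ↦ z ^ m) (∑' p, abelDoubleTerm c z p) := by
    refine (HasAntidiagonal.sigmaAntidiagonalEquivProd.hasSum_iff.mpr hsum).sigma fun m ↦ ?_
    rw [← sum_antidiagonal_pow_div_factorial_mul_neg_pow_div_factorial c z m]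
    exact Finset.hasSum (antidiagonal m) (abelDoubleTerm c z)
  rwa [by_antidiagonals.unique (hasSum_geometric_of_norm_lt_one hz1)] at by_rows

/-- The power series `∑ (c + n)ⁿ wⁿ / n!`, which at `w = z e^{-z}` sums to `e^{c z} S(c z, z)`. -/
noncomputable def abelSeries (c : ℂ) : FormalMultilinearSeries ℂ ℂ ℂ :=
  .ofScalars ℂ fun n ↦ (c + n) ^ n / n.factorial

lemma exp_neg_one_le_radius_abelSeries (c : ℂ) :
    ENNReal.ofReal (Real.exp (-1)) ≤ (abelSeries c).radius := by
  refine (abelSeries c).le_radius_of_bound (Real.exp ‖c‖) fun n ↦ ?_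
  rw [abelSeries, FormalMultilinearSeries.ofScalars_norm,
    Real.coe_toNNReal _ (Real.exp_nonneg _)]
  calc ‖(c + n) ^ n / n.factorial‖ * Real.exp (-1) ^ n
      ≤ Real.exp (‖c‖ + n) * Real.exp (-1) ^ n := by
        gcongr
        exact norm_add_natCast_pow_div_factorial_le c n
    _ = Real.exp ‖c‖ := by
        rw [← Real.exp_nat_mul, ← Real.exp_add]
        ring_nf

lemma mem_eball_radius_abelSeries (c : ℂ) {w : ℂ} (hw : ‖w‖ < Real.exp (-1)) :
    w ∈ Metric.eball 0 (abelSeries c).radius := by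
  refine Metric.eball_subset_eball (exp_neg_one_le_radius_abelSeries c) ?_
  rwa [Metric.eball_ofReal, mem_ball_zero_iff]

lemma hasSum_abelSeries (c : ℂ) {w : ℂ} (hw : ‖w‖ < Real.exp (-1)) :
    HasSum (fun n : ℕ ↦ (c + n) ^ n / n.factorial * w ^ n) ((abelSeries c).sum w) := by
  simpa [abelSeries, mul_comm] using (abelSeries c).hasSum (mem_eball_radius_abelSeries c hw)

lemma analyticAt_sum_abelSeries (c : ℂ) {w : ℂ} (hw : ‖w‖ < Real.exp (-1)) :
    AnalyticAt ℂ (abelSeries c).sum w := by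
  have radius_pos : 0 < (abelSeries c).radius :=
    (ENNReal.ofReal_pos.mpr (Real.exp_pos _)).trans_le (exp_neg_one_le_radius_abelSeries c)
  exact ((abelSeries c).hasFPowerSeriesOnBall radius_pos).analyticOnNhd w
    (mem_eball_radius_abelSeries c hw)

lemma abelTerm_eq_exp_mul (c z : ℂ) (n : ℕ) :
    abelTerm c z n =
      Complex.exp (-(c * z)) * ((c + n) ^ n / n.factorial * (z * Complex.exp (-z)) ^ n) := by
  have exp_eq : Complex.exp (-((c + n) * z)) =
      Complex.exp (-(c * z)) * Complex.exp (-z) ^ n := by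
    rw [← Complex.exp_nat_mul, ← Complex.exp_add]
    ring_nf
  rw [abelTerm, exp_eq, mul_pow, mul_pow]
  ring

lemma hasSum_abelTerm (c : ℂ) {z : ℂ} (hz : ‖z * Complex.exp (-z)‖ < Real.exp (-1)) :
    HasSum (abelTerm c z)
      (Complex.exp (-(c * z)) * (abelSeries c).sum (z * Complex.exp (-z))) :=
  ((hasSum_abelSeries c hz).mul_left _).congr_fun (abelTerm_eq_exp_mul c z)

/-- The region enclosed by the Szegő curve `‖z e^{1 - z}‖ = 1`, `‖z‖ ≤ 1`, on which
`S(c z, z) = 1 / (1 - z)` is continued analytically. The bound `‖z‖ < 1` selects the component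
of `0` in the set `‖z e^{1 - z}‖ < 1`. -/
def szegoRegion : Set ℂ := {z | ‖z * Complex.exp (1 - z)‖ < 1 ∧ ‖z‖ < 1}

lemma zero_mem_szegoRegion : 0 ∈ szegoRegion := by
  simp [szegoRegion]

lemma szegoRegion_mem_nhds_zero : szegoRegion ∈ nhds 0 := by
  have isOpen_szegoRegion : IsOpen szegoRegion := by
    simp only [szegoRegion, Set.ofPred_and]
    exact (isOpen_lt (by fun_prop) (by fun_prop)).inter (isOpen_lt (by fun_prop) (by fun_prop))
  exact isOpen_szegoRegion.mem_nhds zero_mem_szegoRegion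

lemma mul_norm_exp_one_sub_mul_le {z : ℂ} (hz : z.re ≤ 1) {t : ℝ} (ht : t ≤ 1) :
    t * ‖Complex.exp (1 - t * z)‖ ≤ ‖Complex.exp (1 - z)‖ := by
  simp only [Complex.norm_exp, Complex.sub_re, Complex.one_re, Complex.re_ofReal_mul]
  calc t * Real.exp (1 - t * z.re) ≤ Real.exp (t - 1) * Real.exp (1 - t * z.re) := by
        gcongr
        linarith [Real.add_one_le_exp (t - 1)]
    _ = Real.exp (t - t * z.re) := by
        rw [← Real.exp_add]
        ring_nf
    _ ≤ Real.exp (1 - z.re) := Real.exp_le_exp.mpr (by nlinarith)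

lemma starConvex_szegoRegion : StarConvex ℝ 0 szegoRegion := by
  rw [starConvex_zero_iff]
  rintro z ⟨hexp, hnorm⟩ t ht0 ht1
  have re_le_one : z.re ≤ 1 := (Complex.re_le_norm z).trans hnorm.le
  rw [Complex.real_smul]
  constructor
  · calc ‖t * z * Complex.exp (1 - t * z)‖
        = ‖z‖ * (t * ‖Complex.exp (1 - t * z)‖) := by
          rw [norm_mul, norm_mul, Complex.norm_of_nonneg ht0]
          ring
      _ ≤ ‖z‖ * ‖Complex.exp (1 - z)‖ := by
          gcongr
          exact mul_norm_exp_one_sub_mul_le re_le_one ht1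
      _ < 1 := by rwa [← norm_mul]
  · rw [norm_mul, Complex.norm_of_nonneg ht0]
    exact (mul_le_of_le_one_left (norm_nonneg z) ht1).trans_lt hnorm

lemma isPreconnected_szegoRegion : IsPreconnected szegoRegion :=
  (starConvex_szegoRegion.isPathConnected zero_mem_szegoRegion).isConnected.isPreconnected

lemma ofReal_mem_szegoRegion {x : ℝ} (h0 : 0 ≤ x) (h1 : x < 1) : (x : ℂ) ∈ szegoRegion := by
  have mul_exp_lt_one : x * Real.exp (1 - x) < 1 := calc
    x * Real.exp (1 - x) < Real.exp (x - 1) * Real.exp (1 - x) := by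
      gcongr
      linarith [Real.add_one_lt_exp (sub_ne_zero.mpr h1.ne)]
    _ = 1 := by rw [← Real.exp_add, sub_add_sub_cancel, sub_self, Real.exp_zero]
  constructor
  · simpa [Complex.norm_exp, abs_of_nonneg h0] using mul_exp_lt_one
  · simpa [abs_of_nonneg h0] using h1

lemma norm_mul_exp_neg_lt {z : ℂ} (hz : z ∈ szegoRegion) :
    ‖z * Complex.exp (-z)‖ < Real.exp (-1) := calc
  ‖z * Complex.exp (-z)‖ = Real.exp (-1) * ‖z * Complex.exp (1 - z)‖ := by
    rw [norm_mul, norm_mul, Complex.norm_exp, Complex.norm_exp, mul_left_comm, ← Real.exp_add]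
    simp only [Complex.neg_re, Complex.sub_re, Complex.one_re]
    ring_nf
  _ < Real.exp (-1) := mul_lt_of_lt_one_right (Real.exp_pos _) hz.1

lemma hasSum_abelTerm_of_mem_szegoRegion (c : ℂ) {z : ℂ} (hz : z ∈ szegoRegion) :
    HasSum (abelTerm c z) (1 - z)⁻¹ := by
  let S (z : ℂ) : ℂ := Complex.exp (-(c * z)) * (abelSeries c).sum (z * Complex.exp (-z))
  have hasSum_S {z : ℂ} (hz : z ∈ szegoRegion) : HasSum (abelTerm c z) (S z) :=
    hasSum_abelTerm c (norm_mul_exp_neg_lt hz)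
  have analytic_S : AnalyticOnNhd ℂ S szegoRegion := fun z hz ↦
    (by fun_prop : AnalyticAt ℂ (fun z ↦ Complex.exp (-(c * z))) z).mul <|
      (analyticAt_sum_abelSeries c (norm_mul_exp_neg_lt hz)).fun_comp_of_eq
        (by fun_prop : AnalyticAt ℂ (fun z ↦ z * Complex.exp (-z)) z) rfl
  have analytic_inv : AnalyticOnNhd ℂ (fun z ↦ (1 - z)⁻¹) szegoRegion := fun z hz ↦
    (analyticAt_const.sub analyticAt_id).inv
      (sub_ne_zero.mpr fun (h : 1 = z) ↦ by simpa [← h] using hz.2)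
  have eventuallyEq_zero : S =ᶠ[nhds 0] fun z ↦ (1 - z)⁻¹ := by
    filter_upwards [szegoRegion_mem_nhds_zero, Metric.ball_mem_nhds 0 (Real.exp_pos (-2))]
      with z hz hz2
    exact (hasSum_S hz).unique (hasSum_abelTerm_of_norm_lt c (mem_ball_zero_iff.mp hz2))
  have S_eq : S z = (1 - z)⁻¹ := analytic_S.eqOn_of_preconnected_of_eventuallyEq analytic_inv
    isPreconnected_szegoRegion zero_mem_szegoRegion eventuallyEq_zero hz
  exact S_eq ▸ hasSum_S hz

lemma hasSum_add_mul_pow_mul_exp_neg_div_factorial (a : ℂ) {b : ℂ} (hb : b ∈ szegoRegion) :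
    HasSum (fun n : ℕ ↦ (a + n * b) ^ n * Complex.exp (-(a + n * b)) / n.factorial) (1 - b)⁻¹ := by
  obtain rfl | hb0 := eq_or_ne b 0
  · have exponential_series :=
      (NormedSpace.expSeries_div_hasSum_exp a).mul_right (Complex.exp (-a))
    rw [← Complex.exp_eq_exp_ℂ, ← Complex.exp_add] at exponential_series
    simpa [div_mul_eq_mul_div] using exponential_series
  · refine (hasSum_abelTerm_of_mem_szegoRegion (a / b) hb).congr_fun fun n ↦ ?_
    rw [abelTerm, add_mul, div_mul_cancel₀ a hb0, div_mul_eq_mul_div]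

end GenPoisson

theorem genPoisson_mean_general (a : ℂ) {b : ℂ} (hb : b ∈ GenPoisson.szegoRegion) :
    HasSum (fun x : ℕ ↦ (x : ℂ) * (a * (a + x * b) ^ ((x : ℂ) - 1) *
      Complex.exp (-(a + x * b)) / (Nat.factorial x))) (a / (1 - b)) := by
  have shifted := (GenPoisson.hasSum_add_mul_pow_mul_exp_neg_div_factorial (a + b) hb).mul_left a
  rw [← div_eq_mul_inv] at shifted
  rw [← hasSum_nat_add_iff' 1]
  simp only [Finset.range_one, Finset.sum_singleton, Nat.cast_zero, zero_mul, sub_zero]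
  refine shifted.congr_fun fun n ↦ ?_
  have base_eq : a + (n + 1 : ℕ) * b = a + b + n * b := by push_cast; ring
  have exponent_eq : ((n + 1 : ℕ) : ℂ) - 1 = n := by push_cast; ring
  rw [base_eq, exponent_eq, Complex.cpow_natCast, Nat.factorial_succ]
  have : ((n + 1 : ℕ) : ℂ) ≠ 0 := Nat.cast_ne_zero.mpr n.succ_ne_zero
  push_cast at this ⊢
  field_simp

/-- The mean of the Generalized Poisson distribution:
for `λ₁ > 0` and `0 ≤ λ₂ < 1`,
`∑_{x=0}^∞ x · λ₁ (λ₁ + x λ₂)^(x-1) e^{-(λ₁ + x λ₂)} / x! = λ₁ / (1 - λ₂)`. -/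
theorem genPoisson_mean (lam1 lam2 : ℝ) (h1 : 0 < lam1)
    (h2 : 0 ≤ lam2) (h2' : lam2 < 1) :
    ∑' x : ℕ, (x : ℝ) * (lam1 * (lam1 + x * lam2) ^ ((x : ℝ) - 1) *
      Real.exp (-(lam1 + x * lam2)) / (Nat.factorial x)) = lam1 / (1 - lam2) := by
  have base_nonneg (x : ℕ) : 0 ≤ lam1 + x * lam2 := by positivity
  refine (Complex.hasSum_ofReal.mp ?_).tsum_eq
  simpa [Complex.ofReal_cpow (base_nonneg _)] using
    genPoisson_mean_general lam1 (GenPoisson.ofReal_mem_szegoRegion h2 h2')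
end

section
/- For all real numbers λ₁ > 0 and λ₂ with 0 ≤ λ₂ < 1, the variance of the Generalized Poisson distribution satisfies ∑_{x=0}^∞ x² · λ₁(λ₁ + xλ₂)^{x-1} e^{-(λ₁ + xλ₂)} / x! − (λ₁/(1 − λ₂))² = λ₁ / (1 − λ₂)³. -/
/-!
Write `p a x` for the mass at `x` of the distribution with parameters `a` and `b`. Then
`∂ₐ (p a x) = p (a + b) (x - 1) - p a x`, so the partial sums of `p a` decrease in `a` from the
value `1` at `a = 0`. Integrating this delay equation over `[0, a]` bounds the defect
`g a = 1 - ∑' x, p a x ∈ [0, 1]` by `g a ≤ b * g (a + b)`; hence `g a ≤ b ^ k` for all `k`, and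
`g = 0`.

Jensen's sums `S r a = ∑' x, (a + x b) ^ (x + r) e ^ (-(a + x b)) / x!` satisfy
`S (r + 1) a = a * S r a + b * S (r + 1) (a + b)`, and likewise `S 0 a = 1 + b * S 0 (a + b)` by the
normalization of `p`. Unrolling these recurrences gives `S 0` and `S 1` as geometric-type series,
and the second moment of `p a` is `a * (S 0 (a + b) + S 1 (a + 2 b))`.
-/

open Finset Filter Topology

/-- The mass function of the generalized Poisson distribution with parameters `a` (the `λ₁` of the
literature) and `b` (`λ₂`). The mass at `0` is written separately because `a * a⁻¹` is `1` only for
`a ≠ 0`; in this form each mass is smooth in `a` on all of `ℝ`. -/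
noncomputable def genPoissonPMFReal (a b : ℝ) : ℕ → ℝ
  | 0 => Real.exp (-a)
  | n + 1 => a * (a + (n + 1) * b) ^ n * Real.exp (-(a + (n + 1) * b)) / (n + 1).factorial

/-- The `x`-th term of Jensen's sum of order `r`, by which the moments of the generalized Poisson
distribution are computed. -/
noncomputable def jensenTerm (a b : ℝ) (r x : ℕ) : ℝ :=
  (a + x * b) ^ (x + r) * Real.exp (-(a + x * b)) / x.factorial

theorem genPoissonPMFReal_eq_rpow {a : ℝ} (ha : a ≠ 0) (b : ℝ) (x : ℕ) :
    genPoissonPMFReal a b x =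
      a * (a + x * b) ^ ((x : ℝ) - 1) * Real.exp (-(a + x * b)) / x.factorial := by
  cases x with
  | zero => simp [genPoissonPMFReal, Real.rpow_neg_one, ha]
  | succ n =>
    rw [genPoissonPMFReal, Nat.cast_succ, add_sub_cancel_right, Real.rpow_natCast]

theorem genPoissonPMFReal_nonneg {a b : ℝ} (ha : 0 ≤ a) (hb : 0 ≤ b) (x : ℕ) :
    0 ≤ genPoissonPMFReal a b x := by
  cases x <;> unfold genPoissonPMFReal <;> positivity

section PartialSums

theorem hasDerivAt_genPoissonPMFReal_succ (a b : ℝ) (n : ℕ) :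
    HasDerivAt (fun t ↦ genPoissonPMFReal t b (n + 1))
      (genPoissonPMFReal (a + b) b n - genPoissonPMFReal a b (n + 1)) a := by
  have h_exp : HasDerivAt (fun t ↦ Real.exp (-(t + (n + 1) * b)))
      (-Real.exp (-(a + (n + 1) * b))) a := by
    simpa using ((hasDerivAt_id a).add_const ((n + 1) * b)).neg.exp
  have h_pow : HasDerivAt (fun t ↦ (t + (n + 1) * b) ^ n)
      (n * (a + (n + 1) * b) ^ (n - 1)) a := by
    simpa using ((hasDerivAt_id a).add_const ((n + 1) * b)).fun_pow n
  refine ((((hasDerivAt_id' a).fun_mul h_pow).fun_mul h_exp).div_const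
    ((n + 1).factorial : ℝ)).congr_deriv ?_
  cases n with
  | zero =>
    simp only [genPoissonPMFReal, Nat.cast_zero, pow_zero, zero_add, one_mul,
      Nat.factorial_one, Nat.cast_one]
    ring
  | succ m =>
    have h_shift : a + b + (m + 1) * b = a + (m + 1 + 1) * b := by ring
    simp only [genPoissonPMFReal, h_shift, Nat.factorial_succ, Nat.add_sub_cancel]
    push_cast
    field_simp
    ring

theorem hasDerivAt_sum_range_succ_genPoissonPMFReal (a b : ℝ) (n : ℕ) :
    HasDerivAt (fun t ↦ ∑ x ∈ range (n + 1), genPoissonPMFReal t b x)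
      (∑ x ∈ range n, genPoissonPMFReal (a + b) b x -
        ∑ x ∈ range (n + 1), genPoissonPMFReal a b x) a := by
  have h_zero : HasDerivAt (fun t ↦ genPoissonPMFReal t b 0) (-genPoissonPMFReal a b 0) a := by
    simpa [genPoissonPMFReal] using (hasDerivAt_neg a).exp
  simp only [sum_range_succ' _ n]
  refine ((HasDerivAt.fun_sum fun x _ ↦ hasDerivAt_genPoissonPMFReal_succ a b x).add
    h_zero).congr_deriv ?_
  rw [sum_sub_distrib]
  ring

theorem continuous_genPoissonPMFReal (b : ℝ) (x : ℕ) :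
    Continuous fun a ↦ genPoissonPMFReal a b x := by
  cases x <;> unfold genPoissonPMFReal <;> fun_prop

theorem continuous_sum_range_genPoissonPMFReal (b : ℝ) (n : ℕ) :
    Continuous fun a ↦ ∑ x ∈ range n, genPoissonPMFReal a b x :=
  continuous_finsetSum _ fun x _ ↦ continuous_genPoissonPMFReal b x

theorem sum_range_succ_genPoissonPMFReal_zero (b : ℝ) (n : ℕ) :
    ∑ x ∈ range (n + 1), genPoissonPMFReal 0 b x = 1 := by
  simp [sum_range_succ', genPoissonPMFReal]

variable {a b : ℝ}

theorem antitoneOn_sum_range_genPoissonPMFReal (hb : 0 ≤ b) (n : ℕ) :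
    AntitoneOn (fun a ↦ ∑ x ∈ range n, genPoissonPMFReal a b x) (Set.Ici 0) := by
  induction n with
  | zero => simpa using antitoneOn_const
  | succ n ih =>
    refine antitoneOn_of_deriv_nonpos (convex_Ici 0)
      (continuous_sum_range_genPoissonPMFReal b (n + 1)).continuousOn
      (fun a _ ↦ (hasDerivAt_sum_range_succ_genPoissonPMFReal
        a b n).differentiableAt.differentiableWithinAt) fun a ha ↦ ?_
    have ha0 : 0 ≤ a := interior_subset ha
    have h_shift := ih ha0 (add_nonneg ha0 hb) (le_add_of_nonneg_right hb)
    rw [(hasDerivAt_sum_range_succ_genPoissonPMFReal a b n).deriv, sum_range_succ]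
    linarith [genPoissonPMFReal_nonneg ha0 hb n]

theorem sum_range_genPoissonPMFReal_le_one (ha : 0 ≤ a) (hb : 0 ≤ b) (n : ℕ) :
    ∑ x ∈ range n, genPoissonPMFReal a b x ≤ 1 := calc
  _ ≤ ∑ x ∈ range (n + 1), genPoissonPMFReal a b x :=
    sum_le_sum_of_subset_of_nonneg (range_mono n.le_succ)
      fun x _ _ ↦ genPoissonPMFReal_nonneg ha hb x
  _ ≤ ∑ x ∈ range (n + 1), genPoissonPMFReal 0 b x :=
    antitoneOn_sum_range_genPoissonPMFReal hb (n + 1) Set.self_mem_Ici ha ha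
  _ = 1 := sum_range_succ_genPoissonPMFReal_zero b n

theorem summable_genPoissonPMFReal (ha : 0 ≤ a) (hb : 0 ≤ b) :
    Summable (genPoissonPMFReal a b) :=
  summable_of_sum_range_le (genPoissonPMFReal_nonneg ha hb)
    (sum_range_genPoissonPMFReal_le_one ha hb)

theorem tsum_genPoissonPMFReal_le_one (ha : 0 ≤ a) (hb : 0 ≤ b) :
    ∑' x, genPoissonPMFReal a b x ≤ 1 :=
  Real.tsum_le_of_sum_range_le (genPoissonPMFReal_nonneg ha hb)
    (sum_range_genPoissonPMFReal_le_one ha hb)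

end PartialSums

section Normalization

variable {a b : ℝ}

theorem tendsto_integral_genPoissonPMFReal (ha : 0 ≤ a) (hb : 0 ≤ b) :
    Tendsto (fun n ↦ ∫ t in 0..a, genPoissonPMFReal t b n) atTop (𝓝 0) := by
  refine (summable_of_sum_range_le (c := a) (fun n ↦ ?_) fun n ↦ ?_).tendsto_atTop_zero
  · exact intervalIntegral.integral_nonneg ha fun t ht ↦ genPoissonPMFReal_nonneg ht.1 hb n
  · rw [← intervalIntegral.integral_finsetSum fun x _ ↦
      (continuous_genPoissonPMFReal b x).intervalIntegrable 0 a]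
    calc ∫ t in 0..a, ∑ x ∈ range n, genPoissonPMFReal t b x
        ≤ ∫ _ in 0..a, (1 : ℝ) :=
          intervalIntegral.integral_mono_on ha
            ((continuous_sum_range_genPoissonPMFReal b n).intervalIntegrable 0 a)
            intervalIntegrable_const fun t ht ↦ sum_range_genPoissonPMFReal_le_one ht.1 hb n
      _ = a := by simp

theorem sum_range_succ_genPoissonPMFReal_eq_integral (a b : ℝ) (n : ℕ) :
    ∑ x ∈ range (n + 1), genPoissonPMFReal a b x =
      1 + (∫ t in a..a + b, ∑ x ∈ range n, genPoissonPMFReal t b x) -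
        (∫ t in 0..b, ∑ x ∈ range n, genPoissonPMFReal t b x) -
        ∫ t in 0..a, genPoissonPMFReal t b n := by
  set G : ℝ → ℝ := fun t ↦ ∑ x ∈ range n, genPoissonPMFReal t b x
  have hG_cont : Continuous G := continuous_sum_range_genPoissonPMFReal b n
  have hG_int (u v : ℝ) : IntervalIntegrable G MeasureTheory.volume u v :=
    hG_cont.intervalIntegrable u v
  have hp_cont := continuous_genPoissonPMFReal b n
  have h_deriv (t : ℝ) : HasDerivAt (fun t ↦ ∑ x ∈ range (n + 1), genPoissonPMFReal t b x)
      (G (t + b) - G t - genPoissonPMFReal t b n) t :=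
    (hasDerivAt_sum_range_succ_genPoissonPMFReal t b n).congr_deriv (by
      rw [sum_range_succ, sub_sub])
  have hG_shift_cont : Continuous fun t ↦ G (t + b) := by fun_prop
  have hG_diff_cont : Continuous fun t ↦ G (t + b) - G t := by fun_prop
  have h_ftc := intervalIntegral.integral_eq_sub_of_hasDerivAt (fun t _ ↦ h_deriv t)
    ((hG_diff_cont.fun_sub hp_cont).intervalIntegrable 0 a)
  rw [intervalIntegral.integral_sub (hG_diff_cont.intervalIntegrable 0 a)
      (hp_cont.intervalIntegrable 0 a),
    intervalIntegral.integral_sub (hG_shift_cont.intervalIntegrable 0 a) (hG_int 0 a),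
    intervalIntegral.integral_comp_add_right, zero_add,
    intervalIntegral.integral_interval_sub_interval_comm (hG_int _ _) (hG_int _ _) (hG_int _ _),
    intervalIntegral.integral_symm 0 b, intervalIntegral.integral_symm a (a + b),
    sum_range_succ_genPoissonPMFReal_zero] at h_ftc
  linarith

theorem one_sub_sum_range_succ_genPoissonPMFReal_le (ha : 0 ≤ a) (hb : 0 ≤ b) (n : ℕ) :
    1 - ∑ x ∈ range (n + 1), genPoissonPMFReal a b x ≤
      b * (1 - ∑ x ∈ range n, genPoissonPMFReal (a + b) b x) +
        ∫ t in 0..a, genPoissonPMFReal t b n := by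
  have hG_int (u v : ℝ) := (continuous_sum_range_genPoissonPMFReal b n).intervalIntegrable
    (μ := MeasureTheory.volume) u v
  have h_lower : b * ∑ x ∈ range n, genPoissonPMFReal (a + b) b x ≤
      ∫ t in a..a + b, ∑ x ∈ range n, genPoissonPMFReal t b x := by
    have h := intervalIntegral.integral_mono_on (le_add_of_nonneg_right hb)
      intervalIntegrable_const (hG_int a (a + b)) fun t ht ↦
        antitoneOn_sum_range_genPoissonPMFReal hb n (ha.trans ht.1) (add_nonneg ha hb) ht.2
    simpa using h
  have h_upper : ∫ t in 0..b, ∑ x ∈ range n, genPoissonPMFReal t b x ≤ b := by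
    have h := intervalIntegral.integral_mono_on hb (hG_int 0 b) intervalIntegrable_const
      fun t ht ↦ sum_range_genPoissonPMFReal_le_one ht.1 hb n
    simpa using h
  rw [sum_range_succ_genPoissonPMFReal_eq_integral]
  linarith

theorem one_sub_tsum_genPoissonPMFReal_le (ha : 0 ≤ a) (hb : 0 ≤ b) :
    1 - ∑' x, genPoissonPMFReal a b x ≤ b * (1 - ∑' x, genPoissonPMFReal (a + b) b x) := by
  have h_left := ((summable_genPoissonPMFReal ha hb).tendsto_sum_tsum_nat.comp
    (tendsto_add_atTop_nat 1)).const_sub 1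
  have h_right := (((summable_genPoissonPMFReal
    (add_nonneg ha hb) hb).tendsto_sum_tsum_nat.const_sub 1).const_mul b).add
    (tendsto_integral_genPoissonPMFReal ha hb)
  rw [add_zero] at h_right
  exact le_of_tendsto_of_tendsto' h_left h_right
    (one_sub_sum_range_succ_genPoissonPMFReal_le ha hb)

theorem one_sub_tsum_genPoissonPMFReal_le_pow (ha : 0 ≤ a) (hb : 0 ≤ b) (k : ℕ) :
    1 - ∑' x, genPoissonPMFReal a b x ≤ b ^ k := by
  induction k generalizing a with
  | zero =>
    rw [pow_zero]
    exact sub_le_self 1 (tsum_nonneg (genPoissonPMFReal_nonneg ha hb))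
  | succ k ih =>
    rw [pow_succ']
    exact (one_sub_tsum_genPoissonPMFReal_le ha hb).trans
      (mul_le_mul_of_nonneg_left (ih (add_nonneg ha hb)) hb)

theorem hasSum_genPoissonPMFReal (ha : 0 ≤ a) (hb : 0 ≤ b) (hb1 : b < 1) :
    HasSum (genPoissonPMFReal a b) 1 := by
  have h_ge : 1 - ∑' x, genPoissonPMFReal a b x ≤ 0 :=
    ge_of_tendsto' (tendsto_pow_atTop_nhds_zero_of_lt_one hb hb1)
      (one_sub_tsum_genPoissonPMFReal_le_pow ha hb)
  exact (summable_genPoissonPMFReal ha hb).hasSum_iff.2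
    ((tsum_genPoissonPMFReal_le_one ha hb).antisymm (sub_nonpos.1 h_ge))

end Normalization

section ShiftRecurrence

theorem hasSum_sum_antidiagonal_of_nonneg {F : ℕ × ℕ → ℝ} {c : ℕ → ℝ} {s : ℝ}
    (hF : ∀ p, 0 ≤ F p) (h_row : ∀ i, HasSum (fun j ↦ F (i, j)) (c i)) (hc : HasSum c s) :
    HasSum (fun n ↦ ∑ p ∈ antidiagonal n, F p) s := by
  have hF_summable : Summable F := (summable_prod_of_nonneg hF).2
    ⟨fun i ↦ (h_row i).summable, by simpa only [(h_row _).tsum_eq] using hc.summable⟩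
  have hF_sum : HasSum F s :=
    (hF_summable.hasSum.prod_fiberwise h_row).unique hc ▸ hF_summable.hasSum
  refine (HasAntidiagonal.sigmaAntidiagonalEquivProd.hasSum_iff.2 hF_sum).sigma fun n ↦ ?_
  rw [← sum_coe_sort (antidiagonal n) F]
  exact hasSum_fintype _

theorem eq_sum_antidiagonal_of_shift_recurrence {R : Type*} [Semiring R] {b : R}
    {f g : ℕ → ℕ → R}
    (h_zero : ∀ k, f k 0 = g k 0)
    (h_succ : ∀ k n, f k (n + 1) = g k (n + 1) + b * f (k + 1) n) (k n : ℕ) :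
    f k n = ∑ p ∈ antidiagonal n, b ^ p.1 * g (k + p.1) p.2 := by
  induction n generalizing k with
  | zero => simp [h_zero]
  | succ n ih =>
    simp only [h_succ, ih, Nat.sum_antidiagonal_succ, mul_sum, pow_succ', mul_assoc, pow_zero,
      one_mul, add_zero, add_right_comm k, add_assoc k]

theorem hasSum_of_shift_recurrence {b s : ℝ} {f g : ℕ → ℕ → ℝ} {c : ℕ → ℝ} (hb : 0 ≤ b)
    (hg : ∀ k n, 0 ≤ g k n) (h_zero : ∀ k, f k 0 = g k 0)
    (h_succ : ∀ k n, f k (n + 1) = g k (n + 1) + b * f (k + 1) n)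
    (hc : ∀ k, HasSum (g k) (c k)) (hs : HasSum (fun k ↦ b ^ k * c k) s) :
    HasSum (f 0) s := by
  have h_expand : f 0 = fun n ↦ ∑ p ∈ antidiagonal n, b ^ p.1 * g p.1 p.2 := by
    funext n
    simpa only [zero_add] using eq_sum_antidiagonal_of_shift_recurrence h_zero h_succ 0 n
  rw [h_expand]
  exact hasSum_sum_antidiagonal_of_nonneg
    (fun p ↦ mul_nonneg (pow_nonneg hb p.1) (hg p.1 p.2)) (fun k ↦ (hc k).mul_left (b ^ k)) hs

end ShiftRecurrence

section JensenSums

theorem jensenTerm_nonneg {a b : ℝ} (ha : 0 ≤ a) (hb : 0 ≤ b) (r x : ℕ) :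
    0 ≤ jensenTerm a b r x := by
  unfold jensenTerm; positivity

theorem jensenTerm_succ_order (a b : ℝ) (r x : ℕ) :
    jensenTerm a b (r + 1) x = (a + x * b) * jensenTerm a b r x := by
  unfold jensenTerm
  ring

theorem succ_mul_jensenTerm_succ (a b : ℝ) (r n : ℕ) :
    (n + 1) * jensenTerm a b r (n + 1) = jensenTerm (a + b) b (r + 1) n := by
  have h_shift : a + b + n * b = a + (n + 1) * b := by ring
  simp only [jensenTerm, h_shift, Nat.factorial_succ, Nat.cast_mul, Nat.cast_succ]
  field_simp
  ring

theorem jensenTerm_succ_succ (a b : ℝ) (r n : ℕ) :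
    jensenTerm a b (r + 1) (n + 1) =
      a * jensenTerm a b r (n + 1) + b * jensenTerm (a + b) b (r + 1) n := by
  rw [jensenTerm_succ_order, ← succ_mul_jensenTerm_succ]
  push_cast
  ring

theorem succ_mul_genPoissonPMFReal_succ (a b : ℝ) (n : ℕ) :
    (n + 1) * genPoissonPMFReal a b (n + 1) = a * jensenTerm (a + b) b 0 n := by
  have h_shift : a + b + n * b = a + (n + 1) * b := by ring
  simp only [genPoissonPMFReal, jensenTerm, h_shift, Nat.factorial_succ, Nat.cast_mul,
    Nat.cast_succ, add_zero]
  field_simp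

theorem jensenTerm_zero_succ (a b : ℝ) (n : ℕ) :
    jensenTerm a b 0 (n + 1) =
      genPoissonPMFReal a b (n + 1) + b * jensenTerm (a + b) b 0 n := by
  have h_shift : a + b + n * b = a + (n + 1) * b := by ring
  simp only [genPoissonPMFReal, jensenTerm, h_shift, Nat.factorial_succ, Nat.cast_mul,
    Nat.cast_succ, add_zero]
  field_simp
  ring

variable {a b : ℝ}

theorem hasSum_jensenTerm_zero (ha : 0 ≤ a) (hb : 0 ≤ b) (hb1 : b < 1) :
    HasSum (jensenTerm a b 0) (1 - b)⁻¹ := by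
  have h_nonneg (k : ℕ) : 0 ≤ a + k * b := by positivity
  have h_shift (k : ℕ) : a + k * b + b = a + (k + 1 : ℕ) * b := by push_cast; ring
  have h := hasSum_of_shift_recurrence (f := fun k ↦ jensenTerm (a + k * b) b 0)
    (g := fun k ↦ genPoissonPMFReal (a + k * b) b) (c := fun _ ↦ 1) hb
    (fun k ↦ genPoissonPMFReal_nonneg (h_nonneg k) hb)
    (fun k ↦ by simp [jensenTerm, genPoissonPMFReal])
    (fun k n ↦ by rw [jensenTerm_zero_succ, h_shift])
    (fun k ↦ hasSum_genPoissonPMFReal (h_nonneg k) hb hb1)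
    (by simpa only [mul_one] using hasSum_geometric_of_lt_one hb hb1)
  simpa using h

theorem hasSum_jensenTerm_one (ha : 0 ≤ a) (hb : 0 ≤ b) (hb1 : b < 1) :
    HasSum (jensenTerm a b 1) (a / (1 - b) ^ 2 + b ^ 2 / (1 - b) ^ 3) := by
  have h_nonneg (k : ℕ) : 0 ≤ a + k * b := by positivity
  have h_shift (k : ℕ) : a + k * b + b = a + (k + 1 : ℕ) * b := by push_cast; ring
  have h_series : HasSum (fun k : ℕ ↦ b ^ k * ((a + k * b) * (1 - b)⁻¹))
      (a / (1 - b) ^ 2 + b ^ 2 / (1 - b) ^ 3) := by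
    have h_arith := hasSum_coe_mul_geometric_of_norm_lt_one
      (show ‖b‖ < 1 by rwa [Real.norm_of_nonneg hb])
    convert! ((hasSum_geometric_of_lt_one hb hb1).mul_left (a * (1 - b)⁻¹)).add
      (h_arith.mul_left (b * (1 - b)⁻¹)) using 1
    · funext k; ring
    · have : 1 - b ≠ 0 := (sub_pos.2 hb1).ne'
      field_simp
  have h := hasSum_of_shift_recurrence (f := fun k ↦ jensenTerm (a + k * b) b 1)
    (g := fun k n ↦ (a + k * b) * jensenTerm (a + k * b) b 0 n) hb
    (fun k n ↦ mul_nonneg (h_nonneg k) (jensenTerm_nonneg (h_nonneg k) hb 0 n))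
    (fun k ↦ by simp [jensenTerm_succ_order])
    (fun k n ↦ by rw [jensenTerm_succ_succ, h_shift])
    (fun k ↦ (hasSum_jensenTerm_zero (h_nonneg k) hb hb1).mul_left (a + k * b)) h_series
  simpa using h

theorem hasSum_mul_jensenTerm_zero (ha : 0 ≤ a) (hb : 0 ≤ b) (hb1 : b < 1) :
    HasSum (fun x : ℕ ↦ x * jensenTerm a b 0 x)
      ((a + b) / (1 - b) ^ 2 + b ^ 2 / (1 - b) ^ 3) := by
  rw [← hasSum_nat_add_iff' 1]
  simpa [succ_mul_jensenTerm_succ] using hasSum_jensenTerm_one (add_nonneg ha hb) hb hb1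

theorem hasSum_sq_mul_genPoissonPMFReal (ha : 0 ≤ a) (hb : 0 ≤ b) (hb1 : b < 1) :
    HasSum (fun x : ℕ ↦ (x : ℝ) ^ 2 * genPoissonPMFReal a b x)
      (a / (1 - b) ^ 3 + (a / (1 - b)) ^ 2) := by
  have h_term (n : ℕ) : ((n + 1 : ℕ) : ℝ) ^ 2 * genPoissonPMFReal a b (n + 1) =
      a * (n * jensenTerm (a + b) b 0 n + jensenTerm (a + b) b 0 n) := by
    push_cast
    linear_combination (n + 1 : ℝ) * succ_mul_genPoissonPMFReal_succ a b n
  have hab : 0 ≤ a + b := add_nonneg ha hb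
  rw [← hasSum_nat_add_iff' 1]
  simp only [h_term]
  convert! ((hasSum_mul_jensenTerm_zero hab hb hb1).add
    (hasSum_jensenTerm_zero hab hb hb1)).mul_left a using 1
  have : 1 - b ≠ 0 := (sub_pos.2 hb1).ne'
  simp only [sum_range_one, Nat.cast_zero]
  field_simp
  ring

end JensenSums

/-- The variance of the Generalized Poisson distribution:
for `λ₁ > 0` and `0 ≤ λ₂ < 1`,
`∑_{x=0}^∞ x² · λ₁ (λ₁ + x λ₂)^(x-1) e^{-(λ₁ + x λ₂)} / x! − (λ₁/(1-λ₂))²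
  = λ₁ / (1 - λ₂)³`. -/
theorem genPoisson_variance (lam1 lam2 : ℝ) (h1 : 0 < lam1)
    (h2 : 0 ≤ lam2) (h2' : lam2 < 1) :
    (∑' x : ℕ, (x : ℝ) ^ 2 * (lam1 * (lam1 + x * lam2) ^ ((x : ℝ) - 1) *
        Real.exp (-(lam1 + x * lam2)) / (Nat.factorial x)))
      - (lam1 / (1 - lam2)) ^ 2 = lam1 / (1 - lam2) ^ 3 := by
  have h_moment := (hasSum_sq_mul_genPoissonPMFReal h1.le h2 h2').tsum_eq
  simp only [genPoissonPMFReal_eq_rpow h1.ne'] at h_moment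
  rw [h_moment, add_sub_cancel_right]
end

section
/- Let h be a non-negative integer, let v > 0 be real, and let s be real with 0 < s < 2π. Then ∑_{k=0}^∞ e^{-s k} (v + k)^{h} = e^{s v} ( h! / s^{h+1} − ∑_{r=0}^∞ B_{h+r+1}(v) (−s)^r / (r! (h + r + 1)) ), where B_n denotes the n-th Bernoulli polynomial and both series converge. -/
/-!
Put `Φ_h(q) = ∑ₖ (v + k) ^ h q ^ k` and `c_n = B_{n+1}(v) / (n + 1)`. On the half-disc `0 < re s`,
`‖s‖ < 2π` we compare `e^{-sv} Φ_h(e^{-s})` with `h! / s ^ (h + 1) - ∑ᵣ c_{h+r} (-s) ^ r / r!`.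
For `h = 0` the former is the geometric series `e^{-sv} / (1 - e^{-s})`, and the identity is the
generating function `z e^{vz} / (e^z - 1) = ∑ₙ Bₙ(v) z ^ n / n!` at `z = -s`. Applying `-d/ds` to
either side raises `h` by one, which proves all cases.

The radius of convergence `2π` comes from Euler's formula for `ζ(2m)`, which bounds
`|b_{2m}| (2π) ^ {2m} / (2m)!` by `2 ζ(2)`.
-/

open Filter Topology Nat
open scoped Real

section PowerSeries

theorem hasSum_coeff_mul_mul_pow {𝕜 : Type*} [RCLike 𝕜] {f g : PowerSeries 𝕜} {z a b : 𝕜}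
    (hf : HasSum (fun n ↦ f.coeff n * z ^ n) a) (hg : HasSum (fun n ↦ g.coeff n * z ^ n) b) :
    HasSum (fun n ↦ (f * g).coeff n * z ^ n) (a * b) := by
  have hfg := summable_norm_sum_mul_antidiagonal_of_summable_norm hf.summable.norm hg.summable.norm
  rw [← hf.tsum_eq, ← hg.tsum_eq,
    tsum_mul_tsum_eq_tsum_sum_antidiagonal_of_summable_norm hf.summable.norm hg.summable.norm]
  refine hfg.of_norm.hasSum.congr_fun fun n ↦ ?_
  rw [PowerSeries.coeff_mul, Finset.sum_mul]
  refine Finset.sum_congr rfl fun p hp ↦ ?_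
  rw [← Finset.HasAntidiagonal.mem_antidiagonal.mp hp, pow_add]
  ring

variable {a : ℕ → ℂ} {R : ℝ} {z : ℂ}

theorem exists_norm_lt_summable_norm_mul_pow
    (ha : ∀ w : ℂ, ‖w‖ < R → Summable fun n ↦ a n * w ^ n) (hz : ‖z‖ < R) :
    ∃ ρ : ℝ, ‖z‖ < ρ ∧ Summable fun n ↦ ‖a n‖ * ρ ^ n := by
  obtain ⟨ρ, hzρ, hρR⟩ := exists_between hz
  have hρ : ‖(ρ : ℂ)‖ = ρ := Complex.norm_of_nonneg ((norm_nonneg z).trans hzρ.le)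
  exact ⟨ρ, hzρ, by simpa only [norm_mul, norm_pow, hρ] using (ha ρ (by rwa [hρ])).norm⟩

theorem differentiableAt_tsum_mul_pow
    (ha : ∀ w : ℂ, ‖w‖ < R → Summable fun n ↦ a n * w ^ n) (hz : ‖z‖ < R) :
    DifferentiableAt ℂ (fun w ↦ ∑' n, a n * w ^ n) z := by
  obtain ⟨ρ, hzρ, hρ⟩ := exists_norm_lt_summable_norm_mul_pow ha hz
  refine (Complex.differentiableOn_tsum_of_summable_norm hρ (fun n ↦ by fun_prop)
    Metric.isOpen_ball fun n w hw ↦ ?_).differentiableAt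
      (Metric.isOpen_ball.mem_nhds (mem_ball_zero_iff.mpr hzρ))
  rw [norm_mul, norm_pow]
  gcongr
  exact (mem_ball_zero_iff.mp hw).le

theorem hasSum_deriv_tsum_mul_pow
    (ha : ∀ w : ℂ, ‖w‖ < R → Summable fun n ↦ a n * w ^ n) (hz : ‖z‖ < R) :
    HasSum (fun n : ℕ ↦ a n * (n * z ^ (n - 1))) (deriv (fun w ↦ ∑' n, a n * w ^ n) z) := by
  obtain ⟨ρ, hzρ, hρ⟩ := exists_norm_lt_summable_norm_mul_pow ha hz
  refine (Complex.hasSum_deriv_of_summable_norm hρ (fun n ↦ by fun_prop)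
    Metric.isOpen_ball (fun n w hw ↦ ?_) (mem_ball_zero_iff.mpr hzρ)).congr_fun fun n ↦ by simp
  rw [norm_mul, norm_pow]
  gcongr
  exact (mem_ball_zero_iff.mp hw).le

end PowerSeries

section ExponentialGeneratingFunction

/-- The exponential generating function `∑ a n z ^ n / n!` of a sequence, as a function of `z`. -/
noncomputable def egf (a : ℕ → ℂ) (z : ℂ) : ℂ := ∑' n, a n * z ^ n / n !

theorem egf_eq_tsum_div_factorial_mul_pow (a : ℕ → ℂ) :
    egf a = fun z ↦ ∑' n, a n / n ! * z ^ n := by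
  simp only [funext_iff, egf, div_mul_eq_mul_div, implies_true]

variable {a : ℕ → ℂ} {R : ℝ} {z : ℂ}

theorem hasSum_deriv_egf
    (ha : ∀ w : ℂ, ‖w‖ < R → Summable fun n ↦ a n * w ^ n / n !) (hz : ‖z‖ < R) :
    HasSum (fun n ↦ a (n + 1) * z ^ n / n !) (deriv (egf a) z) := by
  simp only [mul_div_right_comm _ (_ ^ _)] at ha
  rw [egf_eq_tsum_div_factorial_mul_pow]
  have hderiv := (hasSum_nat_add_iff' 1).mpr (hasSum_deriv_tsum_mul_pow ha hz)
  simp only [Finset.sum_range_one, cast_zero, zero_mul, mul_zero, sub_zero] at hderiv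
  refine hderiv.congr_fun fun n ↦ ?_
  rw [factorial_succ, Nat.add_sub_cancel]
  push_cast
  field_simp

theorem hasDerivAt_egf
    (ha : ∀ w : ℂ, ‖w‖ < R → Summable fun n ↦ a n * w ^ n / n !) (hz : ‖z‖ < R) :
    HasDerivAt (egf a) (egf (fun n ↦ a (n + 1)) z) z := by
  have hdiff : DifferentiableAt ℂ (egf a) z := by
    simp only [mul_div_right_comm _ (_ ^ _)] at ha
    exact egf_eq_tsum_div_factorial_mul_pow a ▸ differentiableAt_tsum_mul_pow ha hz
  exact hdiff.hasDerivAt.congr_deriv (hasSum_deriv_egf ha hz).tsum_eq.symm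

end ExponentialGeneratingFunction

section Bernoulli

theorem abs_bernoulli_two_mul_le {m : ℕ} (hm : m ≠ 0) :
    |(bernoulli (2 * m) : ℝ)| ≤ π ^ 2 / 3 * ((2 * m)! / (2 * π) ^ (2 * m)) := by
  have hzeta := hasSum_zeta_nat hm
  have hzeta_le : ∀ k : ℕ, 1 / (k : ℝ) ^ (2 * m) ≤ 1 / (k : ℝ) ^ 2 := by
    rintro (_ | k)
    · simp [hm]
    · gcongr
      · simp
      · lia
  have hle := hasSum_le hzeta_le hzeta hasSum_zeta_two
  rw [← abs_of_nonneg (hzeta.nonneg fun k ↦ by positivity)] at hle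
  simp only [abs_div, abs_mul, abs_pow, abs_neg, abs_one, one_pow, one_mul, abs_ofNat, abs_cast,
    abs_of_pos Real.pi_pos] at hle
  have htwo : (2 : ℝ) ^ (2 * m) = 2 * 2 ^ (2 * m - 1) := by
    rw [← _root_.pow_succ']
    congr 1
    lia
  rw [mul_pow, htwo]
  rw [div_le_iff₀ (by positivity)] at hle
  rw [← mul_div_assoc, le_div_iff₀ (by positivity)]
  linarith

theorem abs_bernoulli_le (n : ℕ) : |(bernoulli n : ℝ)| ≤ 4 * (n ! / (2 * π) ^ n) := by
  have hpi := Real.pi_lt_d2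
  rcases n.even_or_odd' with ⟨m, rfl | rfl⟩
  · rcases eq_or_ne m 0 with rfl | hm
    · norm_num
    · refine (abs_bernoulli_two_mul_le hm).trans ?_
      gcongr
      nlinarith [Real.pi_pos]
  · rcases eq_or_ne m 0 with rfl | hm
    · have : (2 : ℝ)⁻¹ ≤ 4 * (2 * π)⁻¹ := by
        rw [← div_eq_mul_inv, le_div_iff₀ (by positivity)]
        linarith
      simpa [bernoulli_one, abs_div] using this
    · rw [bernoulli_eq_zero_of_odd ⟨m, rfl⟩ (by lia)]
      simp only [Rat.cast_zero, abs_zero]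
      positivity

theorem summable_coeff_bernoulliPowerSeries_mul_pow {z : ℂ} (hz : ‖z‖ < 2 * π) :
    Summable fun n ↦ (bernoulliPowerSeries ℂ).coeff n * z ^ n := by
  have hgeom : Summable fun n ↦ 4 * (‖z‖ / (2 * π)) ^ n :=
    (summable_geometric_of_lt_one (by positivity)
      ((div_lt_one Real.two_pi_pos).mpr hz)).mul_left 4
  refine hgeom.of_norm_bounded fun n ↦ ?_
  have hnorm : ‖(bernoulli n : ℂ)‖ = |(bernoulli n : ℝ)| := by
    rw [← Complex.ofReal_ratCast, Complex.norm_real, Real.norm_eq_abs]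
  simp only [bernoulliPowerSeries, PowerSeries.coeff_mk, eq_ratCast, Rat.cast_div, Rat.cast_natCast,
    norm_mul, norm_div, norm_pow, norm_natCast, hnorm]
  calc |(bernoulli n : ℝ)| / n ! * ‖z‖ ^ n
      ≤ 4 * (n ! / (2 * π) ^ n) / n ! * ‖z‖ ^ n := by gcongr; exact abs_bernoulli_le n
    _ = 4 * (‖z‖ / (2 * π)) ^ n := by rw [div_pow]; field_simp

theorem mk_bernoulli_eq_bernoulliPowerSeries_mul {A : Type*} [CommRing A] [IsDomain A]
    [Algebra ℚ A] (v : A) :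
    PowerSeries.mk (fun n ↦ Polynomial.aeval v ((1 / n ! : ℚ) • Polynomial.bernoulli n)) =
      bernoulliPowerSeries A * PowerSeries.rescale v (PowerSeries.exp A) := by
  have hexp : PowerSeries.exp A - 1 ≠ 0 := fun h ↦ by
    simpa [PowerSeries.coeff_exp] using congrArg (PowerSeries.coeff 1) h
  refine mul_right_cancel₀ hexp ?_
  rw [Polynomial.bernoulli_generating_function, mul_right_comm,
    bernoulliPowerSeries_mul_exp_sub_one]

theorem hasSum_coeff_rescale_exp_mul_pow (v z : ℂ) :
    HasSum (fun n ↦ (PowerSeries.rescale v (PowerSeries.exp ℂ)).coeff n * z ^ n)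
      (Complex.exp (v * z)) := by
  rw [Complex.exp_eq_exp_ℂ]
  refine (NormedSpace.expSeries_div_hasSum_exp (v * z)).congr_fun fun n ↦ ?_
  simp only [PowerSeries.coeff_rescale, PowerSeries.coeff_exp, one_div, map_inv₀, map_natCast,
    mul_pow]
  ring

theorem tsum_coeff_bernoulliPowerSeries_mul_exp_sub_one {z : ℂ} (hz : ‖z‖ < 2 * π) :
    (∑' n, (bernoulliPowerSeries ℂ).coeff n * z ^ n) * (Complex.exp z - 1) = z := by
  have hone : HasSum (fun n ↦ (1 : PowerSeries ℂ).coeff n * z ^ n) 1 := by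
    simpa using hasSum_single (f := fun n ↦ (1 : PowerSeries ℂ).coeff n * z ^ n) 0
      fun n hn ↦ by simp [PowerSeries.coeff_one, hn]
  have hX : HasSum (fun n ↦ (PowerSeries.X : PowerSeries ℂ).coeff n * z ^ n) z := by
    simpa using hasSum_single (f := fun n ↦ (PowerSeries.X : PowerSeries ℂ).coeff n * z ^ n) 1
      fun n hn ↦ by simp [PowerSeries.coeff_X, hn]
  have hexp : HasSum (fun n ↦ (PowerSeries.exp ℂ - 1).coeff n * z ^ n) (Complex.exp z - 1) := by
    simpa [sub_mul] using (hasSum_coeff_rescale_exp_mul_pow 1 z).sub hone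
  have hprod := hasSum_coeff_mul_mul_pow (summable_coeff_bernoulliPowerSeries_mul_pow hz).hasSum
    hexp
  rw [bernoulliPowerSeries_mul_exp_sub_one] at hprod
  exact hprod.unique hX

theorem hasSum_bernoulli_mul_pow_div_factorial {z : ℂ} (hz₀ : z ≠ 0) (hz : ‖z‖ < 2 * π) (v : ℂ) :
    HasSum (fun n ↦ Polynomial.aeval v (Polynomial.bernoulli n) * z ^ n / n !)
      (z * Complex.exp (v * z) / (Complex.exp z - 1)) := by
  have hquot := tsum_coeff_bernoulliPowerSeries_mul_exp_sub_one hz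
  have hexp : Complex.exp z - 1 ≠ 0 := right_ne_zero_of_mul (hquot ▸ hz₀)
  have hprod := hasSum_coeff_mul_mul_pow (summable_coeff_bernoulliPowerSeries_mul_pow hz).hasSum
    (hasSum_coeff_rescale_exp_mul_pow v z)
  rw [eq_div_of_mul_eq hexp hquot, div_mul_eq_mul_div,
    ← mk_bernoulli_eq_bernoulliPowerSeries_mul] at hprod
  refine hprod.congr_fun fun n ↦ ?_
  simp only [one_div, Algebra.smul_def, Polynomial.algebraMap_eq, map_mul, Polynomial.aeval_C,
    map_inv₀, map_natCast, PowerSeries.coeff_mk]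
  ring

/-- The quotient `B_{n+1}(v) / (n + 1)`, i.e. `-ζ(-n, v)` for the Hurwitz zeta function. -/
noncomputable def bernoulliQuotient (v : ℂ) (n : ℕ) : ℂ :=
  Polynomial.aeval v (Polynomial.bernoulli (n + 1)) / (n + 1)

theorem hasSum_bernoulliQuotient {z : ℂ} (hz₀ : z ≠ 0) (hz : ‖z‖ < 2 * π) (v : ℂ) :
    HasSum (fun n ↦ bernoulliQuotient v n * z ^ n / n !)
      (Complex.exp (v * z) / (Complex.exp z - 1) - 1 / z) := by
  have htail := ((hasSum_nat_add_iff' 1).mpr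
    (hasSum_bernoulli_mul_pow_div_factorial hz₀ hz v)).div_const z
  convert! htail using 1
  · ext n
    rw [bernoulliQuotient, factorial_succ]
    push_cast
    field_simp
    ring
  · simp [sub_div, div_right_comm _ _ z, hz₀]

theorem summable_bernoulliQuotient {z : ℂ} (hz : ‖z‖ < 2 * π) (v : ℂ) (h : ℕ) :
    Summable fun n ↦ bernoulliQuotient v (h + n) * z ^ n / n ! := by
  induction h generalizing z with
  | zero =>
    rcases eq_or_ne z 0 with rfl | hz₀
    · exact summable_of_ne_finset_zero (s := {0}) fun n hn ↦ by simp_all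
    · simpa using (hasSum_bernoulliQuotient hz₀ hz v).summable
  | succ h ih =>
    simpa only [add_assoc, add_comm 1] using (hasSum_deriv_egf (fun w hw ↦ ih hw) hz).summable

theorem hasDerivAt_egf_bernoulliQuotient {z : ℂ} (hz : ‖z‖ < 2 * π) (v : ℂ) (h : ℕ) :
    HasDerivAt (egf fun n ↦ bernoulliQuotient v (h + n))
      (egf (fun n ↦ bernoulliQuotient v (h + 1 + n)) z) z := by
  simpa only [add_assoc, add_comm 1] using
    hasDerivAt_egf (fun w hw ↦ summable_bernoulliQuotient hw v h) hz

end Bernoulli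

section Lerch

/-- The Lerch transcendent `Φ(q, -h, v)` at a non-positive integer order, as a series in `q`. -/
noncomputable def lerchPhi (q v : ℂ) (h : ℕ) : ℂ := ∑' k : ℕ, (v + k) ^ h * q ^ k

variable {q : ℂ}

theorem hasSum_lerchPhi_succ {v : ℂ} {h : ℕ}
    (hsum : ∀ w : ℂ, ‖w‖ < 1 → Summable fun k : ℕ ↦ (v + k) ^ h * w ^ k) (hq : ‖q‖ < 1) :
    HasSum (fun k : ℕ ↦ (v + k) ^ (h + 1) * q ^ k)
      (v * lerchPhi q v h + q * deriv (lerchPhi · v h) q) := by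
  refine (((hsum q hq).hasSum.mul_left v).add
    ((hasSum_deriv_tsum_mul_pow hsum hq).mul_left q)).congr_fun fun k ↦ ?_
  cases k with
  | zero =>
    simp only [cast_zero, add_zero, pow_zero, mul_one, zero_tsub, mul_zero]
    ring
  | succ k => rw [Nat.add_sub_cancel]; ring

theorem summable_lerchPhi (hq : ‖q‖ < 1) (v : ℂ) (h : ℕ) :
    Summable fun k : ℕ ↦ (v + k) ^ h * q ^ k := by
  induction h generalizing q with
  | zero => simpa using summable_geometric_of_norm_lt_one hq
  | succ h ih => exact (hasSum_lerchPhi_succ (fun w hw ↦ ih hw) hq).summable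

theorem lerchPhi_zero_right (hq : ‖q‖ < 1) (v : ℂ) : lerchPhi q v 0 = (1 - q)⁻¹ := by
  simpa [lerchPhi] using tsum_geometric_of_norm_lt_one hq

theorem lerchPhi_succ (hq : ‖q‖ < 1) (v : ℂ) (h : ℕ) :
    lerchPhi q v (h + 1) = v * lerchPhi q v h + q * deriv (lerchPhi · v h) q :=
  (hasSum_lerchPhi_succ (fun _ hw ↦ summable_lerchPhi hw v h) hq).tsum_eq

theorem differentiableAt_lerchPhi (hq : ‖q‖ < 1) (v : ℂ) (h : ℕ) :
    DifferentiableAt ℂ (lerchPhi · v h) q :=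
  differentiableAt_tsum_mul_pow (fun _ hw ↦ summable_lerchPhi hw v h) hq

variable {s : ℂ}

theorem norm_exp_neg_lt_one (hs : 0 < s.re) : ‖Complex.exp (-s)‖ < 1 := by
  simpa [Complex.norm_exp] using hs

theorem hasDerivAt_exp_neg_mul_lerchPhi (hs : 0 < s.re) (v : ℂ) (h : ℕ) :
    HasDerivAt (fun s ↦ Complex.exp (-(s * v)) * lerchPhi (Complex.exp (-s)) v h)
      (-(Complex.exp (-(s * v)) * lerchPhi (Complex.exp (-s)) v (h + 1))) s := by
  have hq := norm_exp_neg_lt_one hs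
  have hexp : HasDerivAt (fun s ↦ Complex.exp (-(s * v))) (Complex.exp (-(s * v)) * -v) s :=
    (hasDerivAt_mul_const v).fun_neg.cexp
  have hphi := (differentiableAt_lerchPhi hq v h).hasDerivAt.comp s (hasDerivAt_neg s).cexp
  refine (hexp.mul hphi).congr_deriv ?_
  rw [lerchPhi_succ hq]
  simp only [Function.comp_apply]
  ring

theorem exp_neg_mul_lerchPhi_zero (hs : 0 < s.re) (hsπ : ‖s‖ < 2 * π) (v : ℂ) :
    Complex.exp (-(s * v)) * lerchPhi (Complex.exp (-s)) v 0 =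
      1 / s - egf (bernoulliQuotient v) (-s) := by
  have hs₀ : s ≠ 0 := by rintro rfl; simp at hs
  have hq := norm_exp_neg_lt_one hs
  rw [lerchPhi_zero_right hq, egf,
    (hasSum_bernoulliQuotient (neg_ne_zero.mpr hs₀) (by rwa [norm_neg]) v).tsum_eq,
    ← neg_sub (Complex.exp (-s)) 1, inv_neg, mul_neg, mul_comm s v, div_neg]
  ring_nf

theorem exp_neg_mul_lerchPhi (hs : 0 < s.re) (hsπ : ‖s‖ < 2 * π) (v : ℂ) (h : ℕ) :
    Complex.exp (-(s * v)) * lerchPhi (Complex.exp (-s)) v h =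
      h ! / s ^ (h + 1) - egf (fun n ↦ bernoulliQuotient v (h + n)) (-s) := by
  induction h generalizing s with
  | zero => simpa using exp_neg_mul_lerchPhi_zero hs hsπ v
  | succ h ih =>
    have hs₀ : s ≠ 0 := by rintro rfl; simp at hs
    have hpole : HasDerivAt (fun s : ℂ ↦ h ! / s ^ (h + 1)) (-((h + 1)! / s ^ (h + 2))) s := by
      refine ((hasDerivAt_pow (h + 1) s).fun_inv (by positivity)).const_mul (h ! : ℂ)
        |>.congr_deriv ?_
      rw [factorial_succ, Nat.add_sub_cancel]
      push_cast
      field_simp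
      ring
    have hegf : HasDerivAt (fun s ↦ egf (fun n ↦ bernoulliQuotient v (h + n)) (-s))
        (-egf (fun n ↦ bernoulliQuotient v (h + 1 + n)) (-s)) s :=
      ((hasDerivAt_egf_bernoulliQuotient (by rwa [norm_neg]) v h).comp s
        (hasDerivAt_neg s)).congr_deriv (mul_neg_one _)
    have hnhds : ∀ᶠ w in 𝓝 s, 0 < w.re ∧ ‖w‖ < 2 * π :=
      (Complex.continuous_re.continuousAt.eventually_const_lt hs).and
        (continuous_norm.continuousAt.eventually_lt_const hsπ)
    have hderiv := (hasDerivAt_exp_neg_mul_lerchPhi hs v h).unique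
      ((hpole.fun_sub hegf).congr_of_eventuallyEq (hnhds.mono fun w hw ↦ ih hw.1 hw.2))
    linear_combination -hderiv

end Lerch

theorem lerch_bernoulli_expansion_general (h : ℕ) (v s : ℂ) (hs : 0 < s.re)
    (hs2 : ‖s‖ < 2 * Real.pi) :
    Summable (fun k : ℕ => Complex.exp (-s * k) * (v + k) ^ h)
    ∧ Summable (fun r : ℕ =>
        Polynomial.aeval v (Polynomial.bernoulli (h + r + 1)) * (-s) ^ r /
          ((Nat.factorial r : ℂ) * (h + r + 1)))
    ∧ (∑' k : ℕ, Complex.exp (-s * k) * (v + k) ^ h)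
      = Complex.exp (s * v) *
          ((Nat.factorial h : ℂ) / s ^ (h + 1)
            - ∑' r : ℕ, Polynomial.aeval v (Polynomial.bernoulli (h + r + 1)) *
                (-s) ^ r / ((Nat.factorial r : ℂ) * (h + r + 1))) := by
  have hlerch : ∀ k : ℕ, Complex.exp (-s * k) * (v + k) ^ h =
      (v + k) ^ h * Complex.exp (-s) ^ k := fun k ↦ by
    rw [mul_comm, ← Complex.exp_nat_mul, mul_comm (k : ℂ)]
  have hquot : ∀ r : ℕ, Polynomial.aeval v (Polynomial.bernoulli (h + r + 1)) * (-s) ^ r /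
      ((r ! : ℂ) * (h + r + 1)) = bernoulliQuotient v (h + r) * (-s) ^ r / r ! := fun r ↦ by
    rw [bernoulliQuotient, div_mul_eq_mul_div, div_div, mul_comm (r ! : ℂ)]
    push_cast
    rfl
  simp only [hlerch, hquot]
  refine ⟨summable_lerchPhi (norm_exp_neg_lt_one hs) v h,
    summable_bernoulliQuotient (by rwa [norm_neg]) v h, ?_⟩
  change lerchPhi (Complex.exp (-s)) v h =
    Complex.exp (s * v) * (_ - egf (fun n ↦ bernoulliQuotient v (h + n)) (-s))
  rw [← exp_neg_mul_lerchPhi hs hs2, ← mul_assoc, ← Complex.exp_add, add_neg_cancel,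
    Complex.exp_zero, one_mul]

theorem ofReal_aeval_rat (p : Polynomial ℚ) (x : ℝ) :
    ((Polynomial.aeval x p : ℝ) : ℂ) = Polynomial.aeval (x : ℂ) p :=
  (Polynomial.aeval_algebraMap_apply ℂ x p).symm

/-- Erdélyi's identity 1.11(11) specialized to `z = e^{-s}`: for a non-negative
integer `h`, real `v > 0` and `0 < s < 2π`,
`∑_{k=0}^∞ e^{-s k} (v + k)^h
  = e^{s v} ( h! / s^{h+1} − ∑_{r=0}^∞ B_{h+r+1}(v) (−s)^r / (r! (h+r+1)) )`,
where `B_n` is the `n`-th Bernoulli polynomial (convention `b₁ = -1/2`),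
and both series converge. -/
theorem lerch_bernoulli_expansion (h : ℕ) (v s : ℝ) (hv : 0 < v)
    (hs : 0 < s) (hs2 : s < 2 * Real.pi) :
    Summable (fun k : ℕ => Real.exp (-s * k) * (v + k) ^ h)
    ∧ Summable (fun r : ℕ =>
        Polynomial.aeval v (Polynomial.bernoulli (h + r + 1)) * (-s) ^ r /
          ((Nat.factorial r : ℝ) * (h + r + 1)))
    ∧ (∑' k : ℕ, Real.exp (-s * k) * (v + k) ^ h)
      = Real.exp (s * v) *
          ((Nat.factorial h : ℝ) / s ^ (h + 1)
            - ∑' r : ℕ, Polynomial.aeval v (Polynomial.bernoulli (h + r + 1)) *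
                (-s) ^ r / ((Nat.factorial r : ℝ) * (h + r + 1))) := by
  have hgen := lerch_bernoulli_expansion_general h v s (mod_cast hs) (by simpa [abs_of_pos hs])
  simp only [← ofReal_aeval_rat] at hgen
  exact_mod_cast hgen
end

section
/- Fix a non-negative integer x and a real v > 0. Then as s → 0⁺, ∑_{k=0}^∞ e^{-s(v + k)} (v + k)^{x} = x! / s^{x+1} − B_{x+1}(v)/(x + 1) + O(s); that is, there exist constants C > 0 and s₀ > 0 such that for all 0 < s < s₀, | ∑_{k=0}^∞ e^{-s(v+k)} (v + k)^{x} − x!/s^{x+1} + B_{x+1}(v)/(x+1) | ≤ C s. -/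
/-!
The Laplace-type sum `Z u = ∑ₖ e^{u(v+k)}`, `u < 0`, is geometric, and differentiating it `x` times
inserts the factor `(v+k)^x`. Since `Z u = -e^{vu} / (e^u - 1)`, dividing the generating function
`G u = u e^{vu} / (e^u - 1) = ∑ₙ Bₙ(v) uⁿ / n!` by `u` yields `Z u = -1/u - H u`, where
`H u = (G u - G 0) / u` is smooth across `0` with `H⁽ˣ⁾(0) = B_{x+1}(v) / (x+1)`. The `x`-th
derivative of `-1/u` at `u = -s` is `x! / s^{x+1}`, and differentiability of `H⁽ˣ⁾` at `0` gives the
`O(s)` error.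
-/

open MeasureTheory ProbabilityTheory Topology

open scoped ContDiff Nat

section Slope

variable {𝕜 E : Type*} [NontriviallyNormedField 𝕜] [NormedAddCommGroup E] [NormedSpace 𝕜 E]

theorem analyticAt_dslope {f : 𝕜 → E} {a b : 𝕜} (hf : AnalyticAt 𝕜 f b) :
    AnalyticAt 𝕜 (dslope f a) b := by
  rcases eq_or_ne b a with rfl | hba
  · obtain ⟨p, hp⟩ := hf
    exact ⟨_, hp.has_fpower_series_dslope_fslope⟩
  · have hslope : AnalyticAt 𝕜 (fun y => (y - a)⁻¹ • (f y - f a)) b :=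
      ((analyticAt_id.sub analyticAt_const).inv (sub_ne_zero.2 hba)).smul
        (hf.sub analyticAt_const)
    exact hslope.congr (dslope_eventuallyEq_slope_of_ne f hba).symm

theorem factorial_smul_coeff_eq_iteratedDeriv [CompleteSpace E] {f : 𝕜 → E} {a : 𝕜}
    {p : FormalMultilinearSeries 𝕜 𝕜 E} (hp : HasFPowerSeriesAt f p a) (n : ℕ) :
    n ! • p.coeff n = iteratedDeriv n f a := by
  obtain ⟨r, hr⟩ := hp
  exact hr.factorial_smul 1 n

theorem iteratedDeriv_succ_eq_smul_iteratedDeriv_dslope [CompleteSpace E] {f : 𝕜 → E} {a : 𝕜}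
    (hf : AnalyticAt 𝕜 f a) (n : ℕ) :
    iteratedDeriv (n + 1) f a = (n + 1) • iteratedDeriv n (dslope f a) a := by
  obtain ⟨p, hp⟩ := hf
  rw [← factorial_smul_coeff_eq_iteratedDeriv hp,
    ← factorial_smul_coeff_eq_iteratedDeriv hp.has_fpower_series_dslope_fslope,
    FormalMultilinearSeries.coeff_fslope, smul_smul, Nat.factorial_succ]

end Slope

section TaylorPowerSeries

variable {𝕜 : Type*} [NontriviallyNormedField 𝕜]

/-- The formal Taylor series of `f` at `a`, which transports identities between functions to
identities between formal power series. -/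
noncomputable def taylorPowerSeries (f : 𝕜 → 𝕜) (a : 𝕜) : PowerSeries 𝕜 :=
  PowerSeries.mk fun n => iteratedDeriv n f a / n !

theorem taylorPowerSeries_mul [CharZero 𝕜] {f g : 𝕜 → 𝕜} {a : 𝕜} (hf : ContDiffAt 𝕜 ∞ f a)
    (hg : ContDiffAt 𝕜 ∞ g a) :
    taylorPowerSeries (f * g) a = taylorPowerSeries f a * taylorPowerSeries g a := by
  ext n
  have hn : (n : WithTop ℕ∞) ≤ ∞ := mod_cast le_top
  simp only [taylorPowerSeries, PowerSeries.coeff_mk, PowerSeries.coeff_mul,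
    Finset.Nat.sum_antidiagonal_eq_sum_range_succ_mk,
    iteratedDeriv_mul (hf.of_le hn) (hg.of_le hn), Finset.sum_div]
  refine Finset.sum_congr rfl fun i hi => ?_
  have hfactorial : (n ! : 𝕜) ≠ 0 := mod_cast n.factorial_ne_zero
  rw [Nat.cast_choose 𝕜 (Finset.mem_range_succ_iff.1 hi)]
  field_simp

theorem X_mul_taylorPowerSeries_dslope [CharZero 𝕜] [CompleteSpace 𝕜] {f : 𝕜 → 𝕜} {a : 𝕜}
    (hf : AnalyticAt 𝕜 f a) :
    PowerSeries.X * taylorPowerSeries (dslope f a) a =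
      taylorPowerSeries f a - PowerSeries.C (f a) := by
  ext (_ | n)
  · simp [taylorPowerSeries]
  · simp only [taylorPowerSeries, PowerSeries.coeff_succ_X_mul, PowerSeries.coeff_mk, map_sub,
      PowerSeries.coeff_C, iteratedDeriv_succ_eq_smul_iteratedDeriv_dslope hf, nsmul_eq_mul,
      Nat.factorial_succ]
    push_cast
    field_simp
    simp

theorem taylorPowerSeries_exp_const_mul (c : ℝ) :
    taylorPowerSeries (fun u => Real.exp (c * u)) 0 =
      PowerSeries.rescale c (PowerSeries.exp ℝ) := by
  ext n
  simp [taylorPowerSeries, div_eq_mul_inv]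

end TaylorPowerSeries

section BernoulliGenFun

theorem mul_dslope_exp_zero (u : ℝ) : u * dslope Real.exp 0 u = Real.exp u - 1 := by
  simpa using sub_smul_dslope Real.exp 0 u

theorem dslope_exp_zero_ne_zero (u : ℝ) : dslope Real.exp 0 u ≠ 0 := by
  intro h
  have hu : u = 0 := by
    rw [← Real.exp_eq_one_iff, ← sub_eq_zero, ← mul_dslope_exp_zero, h, mul_zero]
  simp [hu] at h

/-- The generating function `u ↦ u e^{vu} / (e^u - 1)` of the Bernoulli polynomials at `v`. Writing
the denominator as `dslope exp 0 u`, the continuous extension of `(e^u - 1) / u`, gives the correct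
value at `u = 0`. -/
noncomputable def bernoulliGenFun (v u : ℝ) : ℝ :=
  Real.exp (v * u) / dslope Real.exp 0 u

theorem bernoulliGenFun_mul_dslope_exp (v : ℝ) :
    bernoulliGenFun v * dslope Real.exp 0 = fun u => Real.exp (v * u) :=
  funext fun u => div_mul_cancel₀ _ (dslope_exp_zero_ne_zero u)

theorem bernoulliGenFun_zero_right (v : ℝ) : bernoulliGenFun v 0 = 1 := by
  simp [bernoulliGenFun]

theorem bernoulliGenFun_div_eq (v u : ℝ) :
    bernoulliGenFun v u / u = Real.exp (v * u) / (Real.exp u - 1) := by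
  rw [bernoulliGenFun, div_div, mul_comm (dslope _ _ _), mul_dslope_exp_zero]

theorem analyticAt_bernoulliGenFun (v u : ℝ) : AnalyticAt ℝ (bernoulliGenFun v) u :=
  (analyticAt_const.mul analyticAt_id).rexp.div (analyticAt_dslope analyticAt_rexp)
    (dslope_exp_zero_ne_zero u)

theorem taylorPowerSeries_bernoulliGenFun (v : ℝ) :
    taylorPowerSeries (bernoulliGenFun v) 0 =
      PowerSeries.mk fun n => Polynomial.aeval v ((1 / n ! : ℚ) • Polynomial.bernoulli n) := by
  have hexp : PowerSeries.X * taylorPowerSeries (dslope Real.exp 0) 0 = PowerSeries.exp ℝ - 1 := by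
    rw [X_mul_taylorPowerSeries_dslope analyticAt_rexp, Real.exp_zero, map_one]
    simpa using taylorPowerSeries_exp_const_mul 1
  have hmul : taylorPowerSeries (bernoulliGenFun v) 0 * taylorPowerSeries (dslope Real.exp 0) 0 =
      PowerSeries.rescale v (PowerSeries.exp ℝ) := by
    rw [← taylorPowerSeries_mul (analyticAt_bernoulliGenFun v 0).contDiffAt
      (analyticAt_dslope analyticAt_rexp).contDiffAt, bernoulliGenFun_mul_dslope_exp,
      taylorPowerSeries_exp_const_mul]
  have hne : PowerSeries.exp ℝ - 1 ≠ 0 := fun h => by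
    simpa using congrArg (PowerSeries.coeff 1) h
  apply mul_right_cancel₀ hne
  rw [Polynomial.bernoulli_generating_function, ← hmul, ← hexp, mul_left_comm]

theorem iteratedDeriv_bernoulliGenFun_zero (v : ℝ) (n : ℕ) :
    iteratedDeriv n (bernoulliGenFun v) 0 = Polynomial.aeval v (Polynomial.bernoulli n) := by
  have h := congrArg (PowerSeries.coeff n) (taylorPowerSeries_bernoulliGenFun v)
  simp only [taylorPowerSeries, PowerSeries.coeff_mk, map_smul, Rat.smul_def] at h
  push_cast at h
  field_simp at h
  exact h

theorem iteratedDeriv_dslope_bernoulliGenFun_zero (v : ℝ) (n : ℕ) :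
    iteratedDeriv n (dslope (bernoulliGenFun v) 0) 0 =
      Polynomial.aeval v (Polynomial.bernoulli (n + 1)) / (n + 1) := by
  rw [← iteratedDeriv_bernoulliGenFun_zero,
    iteratedDeriv_succ_eq_smul_iteratedDeriv_dslope (analyticAt_bernoulliGenFun v 0), nsmul_eq_mul]
  push_cast
  field_simp

end BernoulliGenFun

section ExponentialSums

theorem integral_count_eq_tsum {ι E : Type*} [NormedAddCommGroup E] [NormedSpace ℝ E]
    [CompleteSpace E] [MeasurableSpace ι] [MeasurableSingletonClass ι] [Countable ι] {f : ι → E}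
    (hf : Integrable f Measure.count) :
    ∫ i, f i ∂Measure.count = ∑' i, f i := by
  simp [integral_countable hf, Measure.real]

theorem iteratedDeriv_tsum_exp_mul {ι : Type*} (c : ι → ℝ) {U : Set ℝ}
    (hU : IsOpen U) (hsum : ∀ u ∈ U, Summable fun i => Real.exp (u * c i)) {u : ℝ} (hu : u ∈ U)
    (n : ℕ) :
    iteratedDeriv n (fun t => ∑' i, Real.exp (t * c i)) u =
      ∑' i, Real.exp (u * c i) * c i ^ n := by
  have : Countable ι := by
    rw [← Set.countable_univ_iff]
    exact (hsum u hu).countable_support.mono fun i _ => (Real.exp_pos _).ne'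
  let _ : MeasurableSpace ι := ⊤
  have hUexp : U ⊆ integrableExpSet c Measure.count := fun t ht =>
    integrable_count_iff.2 (hsum t ht).norm
  have hinterior : u ∈ interior (integrableExpSet c Measure.count) := interior_maximal hUexp hU hu
  have hmgf : (fun t => ∑' i, Real.exp (t * c i)) =ᶠ[𝓝 u] mgf c Measure.count := by
    filter_upwards [hU.mem_nhds hu] with t ht using (integral_count_eq_tsum (hUexp ht)).symm
  rw [hmgf.iteratedDeriv_eq, iteratedDeriv_mgf hinterior, integral_count_eq_tsum
    (integrable_pow_mul_exp_of_mem_interior_integrableExpSet hinterior n)]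
  simp only [mul_comm]

theorem hasSum_exp_mul_add_nat (v : ℝ) {u : ℝ} (hu : u < 0) :
    HasSum (fun k : ℕ => Real.exp (u * (v + k))) (-u⁻¹ - dslope (bernoulliGenFun v) 0 u) := by
  have hterm (k : ℕ) : Real.exp (u * (v + k)) = Real.exp (v * u) * Real.exp u ^ k := by
    rw [← Real.exp_nat_mul, ← Real.exp_add]
    ring_nf
  have hvalue : -u⁻¹ - dslope (bernoulliGenFun v) 0 u =
      Real.exp (v * u) * (1 - Real.exp u)⁻¹ := by
    rw [dslope_of_ne _ hu.ne, slope_def_field, bernoulliGenFun_zero_right, sub_zero, sub_div,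
      bernoulliGenFun_div_eq, ← neg_sub (Real.exp u) 1, inv_neg]
    ring
  simp only [hterm, hvalue]
  exact (hasSum_geometric_of_lt_one (Real.exp_pos u).le (Real.exp_lt_one_iff.mpr hu)).mul_left _

theorem iteratedDeriv_neg_inv_neg {𝕜 : Type*} [NontriviallyNormedField 𝕜] (n : ℕ) (s : 𝕜) :
    iteratedDeriv n (fun u : 𝕜 => -u⁻¹) (-s) = n ! / s ^ (n + 1) := by
  have hexponent : (-1 - n : ℤ) = -((n + 1 : ℕ) : ℤ) := by push_cast; ring
  have hinv : iteratedDeriv n (fun u : 𝕜 => u⁻¹) (-s) = (-1) ^ n * n ! * (-s) ^ (-1 - n : ℤ) := by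
    rw [iteratedDeriv_eq_iterate]
    exact iter_deriv_inv n (-s)
  have hsign : (-1 : 𝕜) ^ n * ((-1) ^ n)⁻¹ = 1 := mul_inv_cancel₀ (by simp)
  rw [iteratedDeriv_fun_neg, hinv, hexponent, zpow_neg, zpow_natCast, neg_pow s, pow_succ (-1),
    mul_inv, mul_inv, inv_neg_one]
  linear_combination ((n ! : 𝕜) * (s ^ (n + 1))⁻¹) * hsign

theorem tsum_exp_neg_mul_add_nat_mul_pow (n : ℕ) (v : ℝ) {s : ℝ} (hs : 0 < s) :
    ∑' k : ℕ, Real.exp (-s * (v + k)) * (v + k) ^ n =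
      n ! / s ^ (n + 1) - iteratedDeriv n (dslope (bernoulliGenFun v) 0) (-s) := by
  have hneg : -s ∈ Set.Iio (0 : ℝ) := neg_lt_zero.2 hs
  have hclosed : (fun u => ∑' k : ℕ, Real.exp (u * (v + k))) =ᶠ[𝓝 (-s)]
      fun u => -u⁻¹ - dslope (bernoulliGenFun v) 0 u := by
    filter_upwards [isOpen_Iio.mem_nhds hneg] with u hu using (hasSum_exp_mul_add_nat v hu).tsum_eq
  rw [← iteratedDeriv_tsum_exp_mul _ isOpen_Iio
      (fun u hu => (hasSum_exp_mul_add_nat v hu).summable) hneg,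
    hclosed.iteratedDeriv_eq, iteratedDeriv_fun_sub (contDiffAt_inv ℝ hneg.ne).neg
      (analyticAt_dslope (analyticAt_bernoulliGenFun v _)).contDiffAt,
    iteratedDeriv_neg_inv_neg]

end ExponentialSums

theorem lerch_gamma_bernoulli_approx_general (x : ℕ) (v : ℝ) :
    ∃ C > (0 : ℝ), ∃ s₀ > (0 : ℝ), ∀ s : ℝ, 0 < s → s < s₀ →
      |(∑' k : ℕ, Real.exp (-s * (v + k)) * (v + k) ^ x)
          - (Nat.factorial x : ℝ) / s ^ (x + 1)
          + Polynomial.aeval v (Polynomial.bernoulli (x + 1)) / ((x : ℝ) + 1)|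
        ≤ C * s := by
  have hdiff : DifferentiableAt ℝ (iteratedDeriv x (dslope (bernoulliGenFun v) 0)) 0 := by
    rw [iteratedDeriv_eq_iterate]
    exact ((analyticAt_dslope (analyticAt_bernoulliGenFun v 0)).iterated_deriv x).differentiableAt
  obtain ⟨C, hC, hbound⟩ := hdiff.isBigO_sub.exists_pos
  obtain ⟨s₀, hs₀, hnear⟩ := Metric.eventually_nhds_iff.1 hbound.bound
  refine ⟨C, hC, s₀, hs₀, fun s hs hss₀ => ?_⟩
  have hlip := hnear (y := -s) (by simpa [abs_of_pos hs] using hss₀)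
  rw [sub_zero, norm_neg, Real.norm_eq_abs, Real.norm_of_nonneg hs.le] at hlip
  rwa [tsum_exp_neg_mul_add_nat_mul_pow x v hs, ← iteratedDeriv_dslope_bernoulliGenFun_zero,
    sub_sub_cancel_left, neg_add_eq_sub, abs_sub_comm]

/-- For a fixed non-negative integer `x` and real `v > 0`, as `s → 0⁺`,
`∑_{k=0}^∞ e^{-s(v+k)} (v+k)^x = x!/s^{x+1} − B_{x+1}(v)/(x+1) + O(s)`:
there exist `C > 0` and `s₀ > 0` such that for all `0 < s < s₀`,
`|∑' k, e^{-s(v+k)} (v+k)^x − x!/s^{x+1} + B_{x+1}(v)/(x+1)| ≤ C s`,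
where `B_n` denotes the `n`-th Bernoulli polynomial (convention `b₁ = -1/2`). -/
theorem lerch_gamma_bernoulli_approx (x : ℕ) (v : ℝ) (hv : 0 < v) :
    ∃ C > (0 : ℝ), ∃ s₀ > (0 : ℝ), ∀ s : ℝ, 0 < s → s < s₀ →
      |(∑' k : ℕ, Real.exp (-s * (v + k)) * (v + k) ^ x)
          - (Nat.factorial x : ℝ) / s ^ (x + 1)
          + Polynomial.aeval v (Polynomial.bernoulli (x + 1)) / ((x : ℝ) + 1)|
        ≤ C * s :=
  lerch_gamma_bernoulli_approx_general x v
end
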